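/- arXiv:1709.00639 — 2 statements merged into one kernel-verified Lean document; each statement's English description precedes it below -/
import Mathlib

section
/- Let p be a prime, A a set, n ≥ 1, and let f: ℙ(ℚ^{n+1}) → A be a map that is invariant under ℚ^×-scaling and induced via a ℤ_(p)-lattice B ⊂ ℚ^{n+1}. For x̄ ∈ ℙ(B/pB), let N_{x̄,B} := ρ_B^{-1}(x̄) ⊆ ℙ(ℚ^{n+1}) be the fiber of the reduction map over x̄. If B′ is another f-compatible ℤ_(p)-lattice in ℚ^{n+1} such that N_{x̄′,B′} = N_{x̄,B} for some x̄ ∈ ℙ(B/pB) and some x̄′ ∈ ℙ(B′/pB′), then B′ is equivalent to B. -/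
/- Common set-up for statements about projective spaces `ℙ(V)`: flag maps,
   `ℤ_(p)`-lattices and the associated reduction maps to `ℙ(B/pB)`
   (two nonzero vectors are identified by `ρ_B` iff suitable nonzero scalar
   multiples of them lie in `B ∖ pB` and are congruent modulo `pB`). -/

universe u v w

section PreludeB

variable {k : Type u} [Field k] {V : Type v} [AddCommGroup V] [Module k V] {A : Type w}

/-- The projective subspace `ℙ(W) ⊆ ℙ(V)` attached to a submodule `W ⊆ V`. -/
def psub (W : Submodule k V) : Set (Projectivization k V) :=
  {x | ∃ v : V, ∃ h : v ≠ 0, Projectivization.mk k v h = x ∧ v ∈ W}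

/-- The projective line of `ℙ(V)` through the classes of two (independent)
vectors `v`, `w`. -/
def lineP (v w : V) : Set (Projectivization k V) :=
  {x | ∃ a b : k, ∃ h : a • v + b • w ≠ 0, Projectivization.mk k (a • v + b • w) h = x}

/-- `f` is a flag map on the finite-dimensional projective subspace `ℙ(W)`:
there is a chain (flag) of subspaces of `W` such that `f` is constant on each
successive difference. -/
def ChainFlagOn (f : Projectivization k V → A) (W : Submodule k V) : Prop :=
  ∃ c : ℕ → Submodule k V, c 0 = ⊥ ∧ (∃ n, c n = W) ∧ (∀ i, c i ≤ c (i + 1)) ∧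
    (∀ i, c i ≤ W) ∧
    ∀ i, ∀ x ∈ psub (c (i + 1)) \ psub (c i), ∀ y ∈ psub (c (i + 1)) \ psub (c i), f x = f y

/-- A flag map on a projective space over `F_p` (possibly infinite-dimensional):
the restriction to every finite-dimensional projective subspace is a flag map. -/
def FpFlagMap (f : Projectivization k V → A) : Prop :=
  ∀ W : Submodule k V, FiniteDimensional k W → ChainFlagOn f W

end PreludeB

section PreludeBQ

variable {V : Type v} [AddCommGroup V] [Module ℚ V] {A : Type w}

/-- The `ℤ_(p)`-span of a finite set of vectors (coefficients are rationals
with denominator coprime to `p`). -/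
def zpSpanV (p : ℕ) (s : Finset V) : Set V :=
  {z | ∃ f : V → ℚ, (∀ t, ¬ (p ∣ (f t).den)) ∧ z = ∑ t ∈ s, f t • t}

/-- `p·B`. -/
def pSMul (p : ℕ) (B : Set V) : Set V := {z | ∃ b ∈ B, z = (p : ℚ) • b}

/-- `B` is a `ℤ_(p)`-lattice in the `ℚ`-subspace `W`: a finitely generated
`ℤ_(p)`-submodule spanning `W` over `ℚ`. -/
def IsZpLatIn (p : ℕ) (W : Submodule ℚ V) (B : Set V) : Prop :=
  (∃ s : Finset V, B = zpSpanV p s) ∧ Submodule.span ℚ B = W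

/-- Two nonzero vectors have the same image under the reduction map
`ρ_B : ℙ(V) → ℙ(B/pB)`. -/
def ZpRelV (p : ℕ) (B : Set V) (x y : V) : Prop :=
  ∃ x' y' : V, (∃ a : ℚ, a ≠ 0 ∧ x' = a • x) ∧ (∃ b : ℚ, b ≠ 0 ∧ y' = b • y) ∧
    x' ∈ B ∧ x' ∉ pSMul p B ∧ y' ∈ B ∧ y' ∉ pSMul p B ∧ x' - y' ∈ pSMul p B

/-- Equivalence of lattices: `B' = a·B` for some `a ∈ ℚ^×`. -/
def LatEq (B B' : Set V) : Prop := ∃ a : ℚ, a ≠ 0 ∧ B' = (fun t => a • t) '' B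

/-- `f`, restricted to `ℙ(W)`, is induced via the lattice `B` (i.e. it factors
through the reduction map `ρ_B`); such lattices are called `f`-compatible. -/
def InducedOn (f : Projectivization ℚ V → A) (W : Submodule ℚ V) (p : ℕ) (B : Set V) : Prop :=
  ∀ x y : V, ∀ (hx : x ≠ 0) (hy : y ≠ 0), x ∈ W → y ∈ W → ZpRelV p B x y →
    f (Projectivization.mk ℚ x hx) = f (Projectivization.mk ℚ y hy)

/-- Preimage in `V` of the line of `ℙ(B/pB)` through the residue classes of
`q` and `w`. -/
def resLineV (p : ℕ) (B : Set V) (q w : V) : Set V :=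
  {z | ∃ a b : ℚ, ¬ (p ∣ a.den) ∧ ¬ (p ∣ b.den) ∧ ∃ y ∈ pSMul p B, z = a • q + b • w + y}

/-- `f` is induced via `B` from a flag map on the residue projective *line*
`ℙ(B/pB)`, i.e. from a map constant off one point (the class of `q`). -/
def ResFlagLine (f : Projectivization ℚ V → A) (p : ℕ) (B : Set V) : Prop :=
  ∃ q : V, q ∈ B \ pSMul p B ∧
    ∀ x y : V, ∀ (hx : x ≠ 0) (hy : y ≠ 0), ¬ ZpRelV p B x q → ¬ ZpRelV p B y q →
      f (Projectivization.mk ℚ x hx) = f (Projectivization.mk ℚ y hy)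

/-- `f` is induced via `B` from a flag map on the residue projective *plane*
`ℙ(B/pB)`: for a flag (point `q̄`) ∈ (line `l̄` through `q̄` and `w̄`), the map
is constant off `l̄` and constant on `l̄ ∖ {q̄}`. -/
def ResFlagPlane (f : Projectivization ℚ V → A) (p : ℕ) (B : Set V) : Prop :=
  ∃ q w : V, q ∈ B \ pSMul p B ∧ w ∈ B \ pSMul p B ∧ ¬ ZpRelV p B q w ∧
    (∀ x y : V, ∀ (hx : x ≠ 0) (hy : y ≠ 0),
      (∃ a : ℚ, a ≠ 0 ∧ a • x ∈ (B \ pSMul p B) ∧ a • x ∉ resLineV p B q w) →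
      (∃ b : ℚ, b ≠ 0 ∧ b • y ∈ (B \ pSMul p B) ∧ b • y ∉ resLineV p B q w) →
      f (Projectivization.mk ℚ x hx) = f (Projectivization.mk ℚ y hy)) ∧
    (∀ x y : V, ∀ (hx : x ≠ 0) (hy : y ≠ 0),
      (∃ a : ℚ, a ≠ 0 ∧ a • x ∈ resLineV p B q w \ pSMul p B) → ¬ ZpRelV p B x q →
      (∃ b : ℚ, b ≠ 0 ∧ b • y ∈ resLineV p B q w \ pSMul p B) → ¬ ZpRelV p B y q →
      f (Projectivization.mk ℚ x hx) = f (Projectivization.mk ℚ y hy))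

/-- `f` is induced via `B` from a *flag map* `f̄ : ℙ(B/pB) → A` (general
dimension): there is a chain of sublattices from `pB` to `B` (i.e. a flag of
subspaces of `B/pB`) with `f` constant on each successive difference. -/
def ResChainFlagOn (f : Projectivization ℚ V → A) (p : ℕ) (B : Set V) : Prop :=
  ∃ c : ℕ → Set V, c 0 = pSMul p B ∧ (∃ n, c n = B) ∧ (∀ i, c i ⊆ c (i + 1)) ∧
    (∀ i, (∀ x ∈ c i, ∀ y ∈ c i, x + y ∈ c i) ∧
      (∀ q : ℚ, ¬ (p ∣ q.den) → ∀ x ∈ c i, q • x ∈ c i)) ∧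
    ∀ i, ∀ x y : V, ∀ (hx : x ≠ 0) (hy : y ≠ 0),
      (∃ a : ℚ, a ≠ 0 ∧ a • x ∈ c (i + 1) \ c i) →
      (∃ b : ℚ, b ≠ 0 ∧ b • y ∈ c (i + 1) \ c i) →
      f (Projectivization.mk ℚ x hx) = f (Projectivization.mk ℚ y hy)

/-- `f` is a flag map on the finite-dimensional projective subspace
`ℙ(W) ⊆ ℙ(V)` over `ℚ`: either a chain (flag) of subspaces as over any field,
or induced via a `ℤ_(p)`-lattice `B` in `W` from a flag map on `ℙ(B/pB)`. -/
def QFlagOn (f : Projectivization ℚ V → A) (W : Submodule ℚ V) : Prop :=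
  ChainFlagOn f W ∨
    ∃ p : ℕ, p.Prime ∧ ∃ B : Set V, IsZpLatIn p W B ∧ ResChainFlagOn f p B

/-- A flag map on `ℙ(V)` over `ℚ` (possibly infinite-dimensional): the
restriction to every finite-dimensional projective subspace is a flag map. -/
def QFlagMap (f : Projectivization ℚ V → A) : Prop :=
  ∀ W : Submodule ℚ V, FiniteDimensional ℚ W → QFlagOn f W

end PreludeBQ

section Integrality

variable {p : ℕ} [hp : Fact p.Prime]

lemma padicNorm_le_one_iff_not_dvd_den {q : ℚ} : padicNorm p q ≤ 1 ↔ ¬ p ∣ q.den := by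
  constructor
  · intro h hd
    have hden : padicNorm p q.den < 1 := (padicNorm.nat_lt_one_iff _).2 hd
    have hnum : padicNorm p q.num = 1 := by
      refine (padicNorm.int_eq_one_iff _).2 fun hn => ?_
      exact Nat.not_coprime_of_dvd_of_dvd hp.out.one_lt (Int.natCast_dvd.1 hn) hd q.reduced
    have hmul : padicNorm p q * padicNorm p q.den = 1 := by
      rw [← padicNorm.mul, Rat.mul_den_eq_num, hnum]
    nlinarith [padicNorm.nonneg (p := p) q, padicNorm.nonneg (p := p) (q.den : ℚ)]
  · intro h
    have := Padic.norm_rat_le_one h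
    rw [Padic.eq_padicNorm] at this
    exact_mod_cast this

lemma padicNorm_div_p_le_one {q : ℚ} (h : padicNorm p q < 1) : padicNorm p (q / p) ≤ 1 := by
  have hp1 : (1 : ℚ) < p := by exact_mod_cast hp.out.one_lt
  rcases eq_or_ne q 0 with rfl | hq
  · simp
  obtain ⟨z, hz⟩ := padicNorm.values_discrete (p := p) hq
  have hz0 : -z < 0 := by
    by_contra! hcon
    exact absurd h (not_lt.2 (hz ▸ one_le_zpow₀ hp1.le hcon))
  rw [padicNorm.div, hz, padicNorm.padicNorm_p_of_prime, div_inv_eq_mul,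
    ← zpow_add_one₀ (by positivity)]
  exact zpow_le_one_of_nonpos₀ hp1.le (by omega)

lemma padicNorm_p_mul_lt_one {q : ℚ} (h : padicNorm p q ≤ 1) : padicNorm p (p * q) < 1 := by
  rw [padicNorm.mul]
  have h1 := padicNorm.padicNorm_p_lt_one_of_prime (p := p)
  nlinarith [padicNorm.nonneg (p := p) (p : ℚ)]

lemma padicNorm_add_eq_one {q r : ℚ} (hq : padicNorm p q = 1) (hr : padicNorm p r < 1) :
    padicNorm p (q + r) = 1 := by
  rw [padicNorm.add_eq_max_of_ne (by rw [hq]; exact hr.ne'), hq, max_eq_left hr.le]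

end Integrality

section Lattices

variable {p : ℕ} {V : Type v} [AddCommGroup V] [Module ℚ V]

/-- `B` is closed under the operations of a `ℤ_(p)`-module. -/
structure IsZpSubmodule (p : ℕ) (B : Set V) : Prop where
  add : ∀ x ∈ B, ∀ y ∈ B, x + y ∈ B
  smul : ∀ q : ℚ, padicNorm p q ≤ 1 → ∀ x ∈ B, q • x ∈ B

lemma pSMul_smul_mem {B : Set V} (hB : IsZpSubmodule p B) {q : ℚ} (hq : padicNorm p q ≤ 1)
    {x : V} (hx : x ∈ pSMul p B) : q • x ∈ pSMul p B := by
  obtain ⟨b, hb, rfl⟩ := hx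
  exact ⟨q • b, hB.smul q hq b hb, smul_comm _ _ _⟩

lemma pSMul_add_mem {B : Set V} (hB : IsZpSubmodule p B) {x y : V} (hx : x ∈ pSMul p B)
    (hy : y ∈ pSMul p B) : x + y ∈ pSMul p B := by
  obtain ⟨b, hb, rfl⟩ := hx
  obtain ⟨c, hc, rfl⟩ := hy
  exact ⟨b + c, hB.add b hb c hc, (smul_add _ _ _).symm⟩

lemma pSMul_neg_mem {B : Set V} (hB : IsZpSubmodule p B) {x : V} (hx : x ∈ pSMul p B) :
    -x ∈ pSMul p B := by
  simpa using pSMul_smul_mem hB (q := -1) (by simp) hx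

lemma ZpRelV.symm {B : Set V} (hB : IsZpSubmodule p B) {x y : V} (h : ZpRelV p B x y) :
    ZpRelV p B y x := by
  obtain ⟨x', y', hx, hy, h1, h2, h3, h4, h5⟩ := h
  exact ⟨y', x', hy, hx, h3, h4, h1, h2, by simpa using pSMul_neg_mem hB h5⟩

lemma ZpRelV.smul {B : Set V} {x y : V} {a b : ℚ} (ha : a ≠ 0) (hb : b ≠ 0)
    (h : ZpRelV p B x y) : ZpRelV p B (a • x) (b • y) := by
  obtain ⟨x', y', ⟨c, hc, rfl⟩, ⟨d, hd, rfl⟩, h⟩ := h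
  refine ⟨c • x, d • y, ⟨c / a, div_ne_zero hc ha, ?_⟩, ⟨d / b, div_ne_zero hd hb, ?_⟩, h⟩
  · rw [smul_smul, div_mul_cancel₀ _ ha]
  · rw [smul_smul, div_mul_cancel₀ _ hb]

variable [hp : Fact p.Prime]

lemma mem_zpSpanV_iff {s : Finset V} {z : V} :
    z ∈ zpSpanV p s ↔ ∃ f : V → ℚ, (∀ t ∈ s, padicNorm p (f t) ≤ 1) ∧ z = ∑ t ∈ s, f t • t := by
  classical
  constructor
  · rintro ⟨f, hf, rfl⟩
    exact ⟨f, fun t _ => padicNorm_le_one_iff_not_dvd_den.2 (hf t), rfl⟩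
  · rintro ⟨f, hf, rfl⟩
    refine ⟨fun t => if t ∈ s then f t else 0, fun t => ?_, ?_⟩
    · rw [← padicNorm_le_one_iff_not_dvd_den]
      by_cases ht : t ∈ s
      · simpa [ht] using hf t ht
      · simp [ht]
    · exact Finset.sum_congr rfl fun t ht => by simp [ht]

lemma isZpSubmodule_zpSpanV (s : Finset V) : IsZpSubmodule p (zpSpanV p s) where
  add := by
    intro x hx y hy
    rw [mem_zpSpanV_iff] at hx hy ⊢
    obtain ⟨f, hf, rfl⟩ := hx
    obtain ⟨g, hg, rfl⟩ := hy
    refine ⟨fun t => f t + g t, fun t ht => ?_, ?_⟩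
    · exact padicNorm.nonarchimedean.trans (max_le (hf t ht) (hg t ht))
    · simp [add_smul, Finset.sum_add_distrib]
  smul := by
    intro q hq x hx
    rw [mem_zpSpanV_iff] at hx ⊢
    obtain ⟨f, hf, rfl⟩ := hx
    refine ⟨fun t => q * f t, fun t ht => ?_, ?_⟩
    · rw [padicNorm.mul]
      exact mul_le_one₀ hq (padicNorm.nonneg _) (hf t ht)
    · simp [Finset.smul_sum, mul_smul]

lemma pSMul_subset {B : Set V} (hB : IsZpSubmodule p B) : pSMul p B ⊆ B := by
  rintro _ ⟨b, hb, rfl⟩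
  exact hB.smul _ (padicNorm.of_nat p) b hb

/-- A generating set of minimal cardinality of a `ℤ_(p)`-lattice is linearly independent
over `ℚ`. -/
lemma exists_linearIndepOn_zpSpanV (s : Finset V) :
    ∃ s' : Finset V, zpSpanV p s' = zpSpanV p s ∧ LinearIndepOn ℚ id (s' : Set V) := by
  classical
  induction s using Finset.strongInduction with
  | H s ih =>
    by_cases hs : LinearIndepOn ℚ id (s : Set V)
    · exact ⟨s, rfl, hs⟩
    rw [linearIndepOn_finset_iff] at hs
    push Not at hs
    obtain ⟨g, hg, i, hi, hgi⟩ := hs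
    obtain ⟨j, hj, hmax⟩ := s.exists_max_image (fun t => padicNorm p (g t)) ⟨i, hi⟩
    have hgj : g j ≠ 0 := by
      intro h0
      have := hmax i hi
      rw [h0, padicNorm.zero] at this
      exact padicNorm.nonzero hgi (this.antisymm (padicNorm.nonneg _))
    have hsum : ∑ t ∈ s.erase j, (-(g t / g j)) • t = j := by
      have h1 : g j • j + ∑ t ∈ s.erase j, g t • t = 0 := by
        rw [Finset.add_sum_erase s (fun t => g t • t) hj]
        simpa using hg
      have h2 : ∑ t ∈ s.erase j, (-(g t / g j)) • t =
          (-(g j)⁻¹) • ∑ t ∈ s.erase j, g t • t := by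
        rw [Finset.smul_sum]
        refine Finset.sum_congr rfl fun t _ => ?_
        rw [smul_smul]
        congr 1
        ring
      rw [h2, eq_neg_of_add_eq_zero_right h1, smul_neg, neg_smul, neg_neg, smul_smul,
        inv_mul_cancel₀ hgj, one_smul]
    have hjmem : j ∈ zpSpanV p (s.erase j) := by
      rw [mem_zpSpanV_iff]
      refine ⟨fun t => -(g t / g j), fun t ht => ?_, hsum.symm⟩
      rw [padicNorm.neg, padicNorm.div]
      exact div_le_one_of_le₀ (hmax t (Finset.mem_of_mem_erase ht)) (padicNorm.nonneg _)
    have heq : zpSpanV p (s.erase j) = zpSpanV p s := by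
      have hsub := isZpSubmodule_zpSpanV (p := p) (s.erase j)
      ext z
      constructor
      · rw [mem_zpSpanV_iff, mem_zpSpanV_iff]
        rintro ⟨f, hf, rfl⟩
        refine ⟨fun t => if t = j then 0 else f t, fun t ht => ?_, ?_⟩
        · by_cases htj : t = j
          · simp [htj]
          · simpa [htj] using hf t (Finset.mem_erase.2 ⟨htj, ht⟩)
        · rw [← Finset.add_sum_erase s _ hj]
          simp only [if_true, zero_smul, zero_add]
          exact Finset.sum_congr rfl fun t ht => by simp [Finset.ne_of_mem_erase ht]
      · intro hz
        obtain ⟨f, hf, rfl⟩ := mem_zpSpanV_iff.1 hz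
        rw [← Finset.add_sum_erase s _ hj]
        refine hsub.add _ (hsub.smul _ (hf j hj) _ hjmem) _ (mem_zpSpanV_iff.2 ⟨f, ?_, rfl⟩)
        exact fun t ht => hf t (Finset.mem_of_mem_erase ht)
    obtain ⟨s', hs', hind⟩ := ih _ (Finset.erase_ssubset hj)
    exact ⟨s', hs'.trans heq, hind⟩

/-- A primitive vector of a `ℤ_(p)`-lattice takes the value `1` under some linear form which is
integral on the lattice. -/
lemma exists_integral_form {s : Finset V} {x : V} (hx : x ∈ zpSpanV p s)
    (hx' : x ∉ pSMul p (zpSpanV p s)) :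
    ∃ φ : V →ₗ[ℚ] ℚ, φ x = 1 ∧ ∀ b ∈ zpSpanV p s, padicNorm p (φ b) ≤ 1 := by
  classical
  obtain ⟨s', hs', hind⟩ := exists_linearIndepOn_zpSpanV (p := p) s
  rw [← hs'] at hx hx' ⊢
  obtain ⟨f, hf, rfl⟩ := mem_zpSpanV_iff.1 hx
  have hp0 : (p : ℚ) ≠ 0 := by exact_mod_cast hp.out.ne_zero
  obtain ⟨j, hj, hfj⟩ : ∃ j ∈ s', padicNorm p (f j) = 1 := by
    by_contra! hcon
    refine hx' ⟨∑ t ∈ s', (f t / p) • t, mem_zpSpanV_iff.2 ⟨_, fun t ht => ?_, rfl⟩, ?_⟩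
    · exact padicNorm_div_p_le_one (lt_of_le_of_ne (hf t ht) (hcon t ht))
    · rw [Finset.smul_sum]
      refine Finset.sum_congr rfl fun t _ => ?_
      rw [smul_smul, mul_div_cancel₀ _ hp0]
  have hfj0 : f j ≠ 0 := by
    rintro h
    simp [h] at hfj
  let bas := Module.Basis.extend hind
  let e : s' → hind.extend (Set.subset_univ _) :=
    fun t => ⟨t, hind.subset_extend _ t.2⟩
  let φ : V →ₗ[ℚ] ℚ := (f j)⁻¹ • bas.coord (e ⟨j, hj⟩)
  have hφ : ∀ t ∈ s', φ t = if t = j then (f j)⁻¹ else 0 := by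
    intro t ht
    have hbt : bas (e ⟨t, ht⟩) = t := Module.Basis.extend_apply_self hind _
    have : bas.coord (e ⟨j, hj⟩) t = if t = j then 1 else 0 := by
      conv_lhs => rw [← hbt]
      rw [Module.Basis.coord_apply, Module.Basis.repr_self, Finsupp.single_apply]
      simp [e, Subtype.ext_iff]
    simp [φ, this]
  have hsum : ∀ g : V → ℚ, φ (∑ t ∈ s', g t • t) = g j * (f j)⁻¹ := by
    intro g
    rw [map_sum, Finset.sum_congr rfl (g := fun t => if t = j then g j * (f j)⁻¹ else 0)]
    · simp [hj]
    · intro t ht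
      rw [map_smul, hφ t ht]
      by_cases h : t = j <;> simp [h]
  refine ⟨φ, by rw [hsum, mul_inv_cancel₀ hfj0], fun b hb => ?_⟩
  obtain ⟨g, hg, rfl⟩ := mem_zpSpanV_iff.1 hb
  rw [hsum, ← div_eq_mul_inv, padicNorm.div, hfj, div_one]
  exact hg j hj

/-- Two scalars making the same vector primitive differ by a unit of `ℤ_(p)`. -/
lemma padicNorm_eq_one_of_primitive {B : Set V} (hB : IsZpSubmodule p B) {φ : V →ₗ[ℚ] ℚ}
    (hφ : ∀ b ∈ B, padicNorm p (φ b) ≤ 1) {x : V} (hx : x ∈ B) (hφx : φ x = 1) {e : ℚ}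
    (hex : e • x ∈ B) (hex' : e • x ∉ pSMul p B) : padicNorm p e = 1 := by
  have hp0 : (p : ℚ) ≠ 0 := by exact_mod_cast hp.out.ne_zero
  have h1 : padicNorm p e ≤ 1 := by simpa [hφx] using hφ _ hex
  refine h1.antisymm (not_lt.1 fun h => hex' ⟨(e / p) • x, ?_, ?_⟩)
  · exact hB.smul _ (padicNorm_div_p_le_one h) x hx
  · rw [smul_smul, mul_div_cancel₀ _ hp0]

lemma ZpRelV.trans {s : Finset V} {x y z : V} (h : ZpRelV p (zpSpanV p s) x y)
    (h' : ZpRelV p (zpSpanV p s) y z) : ZpRelV p (zpSpanV p s) x z := by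
  have hB := isZpSubmodule_zpSpanV (p := p) s
  obtain ⟨_, _, ⟨a, ha, rfl⟩, ⟨b, hb, rfl⟩, hx, hx', hy, hy', hxy⟩ := h
  obtain ⟨_, _, ⟨c, hc, rfl⟩, ⟨d, hd, rfl⟩, hw, hw', hz, hz', hwz⟩ := h'
  obtain ⟨φ, hφ1, hφ⟩ := exists_integral_form hy hy'
  have hcb : c • y = (c / b) • b • y := by rw [smul_smul, div_mul_cancel₀ _ hb]
  have hu : padicNorm p (c / b) = 1 := by
    rw [hcb] at hw hw'
    exact padicNorm_eq_one_of_primitive hB hφ hy hφ1 hw hw'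
  have hu0 : c / b ≠ 0 := div_ne_zero hc hb
  refine ⟨(c / b) • a • x, d • z, ⟨c / b * a, mul_ne_zero hu0 ha, smul_smul _ _ _⟩,
    ⟨d, hd, rfl⟩, hB.smul _ hu.le _ hx, fun hcon => hx' ?_, hz, hz', ?_⟩
  · have := pSMul_smul_mem hB (q := (c / b)⁻¹)
      (by rw [← one_div, padicNorm.div, hu]; simp) hcon
    rwa [smul_smul, inv_mul_cancel₀ hu0, one_smul] at this
  · have := pSMul_add_mem hB (pSMul_smul_mem hB hu.le hxy) hwz
    rwa [smul_sub, ← hcb, sub_add_sub_cancel] at this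

/-- If every vector in the `B`-residue class of `x` is in the `B'`-residue class of `x`, and
`a • x` is primitive in `B'`, then `a • B ⊆ B'`. -/
lemma smul_mem_of_zpRelV_imp {B : Set V} (hB : IsZpSubmodule p B) {s' : Finset V} {x : V}
    (hx : x ∈ B) (hx' : x ∉ pSMul p B) {a : ℚ} (ha : a ≠ 0) (hax : a • x ∈ zpSpanV p s')
    (hax' : a • x ∉ pSMul p (zpSpanV p s'))
    (h : ∀ v : V, v ≠ 0 → ZpRelV p B v x → ZpRelV p (zpSpanV p s') v x) {b : V} (hb : b ∈ B) :
    a • b ∈ zpSpanV p s' := by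
  have hB' := isZpSubmodule_zpSpanV (p := p) s'
  have hp0 : (p : ℚ) ≠ 0 := by exact_mod_cast hp.out.ne_zero
  obtain ⟨φ, hφ1, hφ⟩ := exists_integral_form hax hax'
  have key : ∀ t : ℚ, padicNorm p t ≤ 1 → ∃ g e : ℚ, padicNorm p e = 1 ∧ ∃ b' ∈ zpSpanV p s',
      g • (a • x + (p * t) • a • b) = e • a • x + (p : ℚ) • b' := by
    intro t ht
    have hmem : (p * t) • b ∈ pSMul p B := ⟨t • b, hB.smul t ht b hb, mul_smul _ _ _⟩
    have hnot : x + (p * t) • b ∉ pSMul p B := fun hcon => hx' <| by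
      simpa using pSMul_add_mem hB hcon (pSMul_neg_mem hB hmem)
    have hne : x + (p * t) • b ≠ 0 := fun h0 => hx' <| by
      rw [eq_neg_of_add_eq_zero_left h0]
      exact pSMul_neg_mem hB hmem
    obtain ⟨_, _, ⟨c, hc, rfl⟩, ⟨d, hd, rfl⟩, -, -, hdx, hdx', b', hb', heq⟩ := h _ hne
      ⟨_, _, ⟨1, one_ne_zero, (one_smul _ _).symm⟩, ⟨1, one_ne_zero, (one_smul _ _).symm⟩,
        hB.add _ hx _ (pSMul_subset hB hmem), hnot, hx, hx', by simpa using hmem⟩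
    have hda : d • x = (d / a) • a • x := by rw [smul_smul, div_mul_cancel₀ _ ha]
    rw [hda] at hdx hdx'
    refine ⟨c / a, d / a, padicNorm_eq_one_of_primitive hB' hφ hax hφ1 hdx hdx', b', hb', ?_⟩
    rw [← heq, ← hda, add_sub_cancel, smul_comm _ a b, ← smul_add, smul_smul,
      div_mul_cancel₀ _ ha]
  have hval : ∀ t : ℚ, padicNorm p t ≤ 1 → 1 + p * t * φ (a • b) ≠ 0 := by
    intro t ht h0
    obtain ⟨g, e, he, b', hb', heq⟩ := key t ht
    have h1 := congrArg φ heq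
    rw [map_smul, map_add, map_add, map_smul φ (p * t) (a • b), map_smul φ e, map_smul φ (p : ℚ), hφ1] at h1
    simp only [smul_eq_mul, mul_one] at h1
    rw [h0, mul_zero] at h1
    have := padicNorm_add_eq_one he (padicNorm_p_mul_lt_one (hφ b' hb'))
    rw [← h1] at this
    simp at this
  have hint : padicNorm p (φ (a • b)) ≤ 1 := by
    have hlt : padicNorm p (p * φ (a • b)) < 1 := by
      by_contra! hcon
      have hne : (p : ℚ) * φ (a • b) ≠ 0 := fun h0 => by
        rw [h0, padicNorm.zero] at hcon
        linarith
      refine hval (-(1 / (p * φ (a • b)))) ?_ ?_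
      · rw [padicNorm.neg, padicNorm.div, padicNorm.one]
        exact div_le_one_of_le₀ hcon (padicNorm.nonneg _)
      · have hφ0 := right_ne_zero_of_mul hne
        field_simp
        ring
    simpa [mul_div_cancel_left₀ _ hp0] using padicNorm_div_p_le_one hlt
  obtain ⟨g, e, he, b', hb', heq⟩ := key 1 (by simp)
  rw [mul_one] at heq
  have h1 : g * (1 + p * φ (a • b)) = e + p * φ b' := by
    have := congrArg φ heq
    rw [map_smul, map_add, map_add, map_smul φ (p : ℚ) (a • b), map_smul φ e,
      map_smul φ (p : ℚ) b', hφ1] at this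
    simpa using this
  have hg : padicNorm p g = 1 := by
    have h2 := congrArg (padicNorm p) h1
    rwa [padicNorm.mul, padicNorm_add_eq_one padicNorm.one (padicNorm_p_mul_lt_one hint),
      padicNorm_add_eq_one he (padicNorm_p_mul_lt_one (hφ b' hb')), mul_one] at h2
  have hg0 : g ≠ 0 := by
    rintro rfl
    simp at hg
  have hab : a • b = g⁻¹ • ((g * φ (a • b) - φ b') • a • x + b') := by
    have h3 : (p : ℚ) • g • a • b = (p : ℚ) • ((g * φ (a • b) - φ b') • a • x + b') := by
      have h4 : e = g + p * (g * φ (a • b) - φ b') := by linear_combination -h1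
      rw [h4, smul_add, add_smul, add_assoc, add_right_inj, smul_comm g (p : ℚ)] at heq
      rw [heq, smul_add, mul_smul]
    rw [← smul_right_injective V hp0 h3, smul_smul g⁻¹, inv_mul_cancel₀ hg0, one_smul]
  rw [hab]
  refine hB'.smul _ ?_ _ (hB'.add _ (hB'.smul _ ?_ _ hax) _ hb')
  · rw [← one_div, padicNorm.div, hg]
    simp
  · refine padicNorm.sub.trans (max_le ?_ (hφ b' hb'))
    rw [padicNorm.mul, hg, one_mul]
    exact hint

end Lattices

/-- Lemma 3.2: if `f : ℙ(ℚ^{n+1}) → A` is induced via the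
`ℤ_(p)`-lattices `B` and `B'`, and some fiber of `ρ_B` coincides with some
fiber of `ρ_{B'}`, then `B` and `B'` are equivalent. -/
theorem stmt7 (p : ℕ) (hp : p.Prime) (n : ℕ) (hn : 1 ≤ n) (A : Type w)
    (f : Projectivization ℚ (Fin (n + 1) → ℚ) → A)
    (B B' : Set (Fin (n + 1) → ℚ))
    (hB : IsZpLatIn p ⊤ B) (hB' : IsZpLatIn p ⊤ B')
    (hfB : InducedOn f ⊤ p B) (hfB' : InducedOn f ⊤ p B')
    (x₀ x₀' : Fin (n + 1) → ℚ)
    (hx₀ : x₀ ∈ B \ pSMul p B) (hx₀' : x₀' ∈ B' \ pSMul p B')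
    (hfib : {z : Projectivization ℚ (Fin (n + 1) → ℚ) |
        ∃ v, ∃ h : v ≠ 0, Projectivization.mk ℚ v h = z ∧ ZpRelV p B v x₀} =
      {z : Projectivization ℚ (Fin (n + 1) → ℚ) |
        ∃ v, ∃ h : v ≠ 0, Projectivization.mk ℚ v h = z ∧ ZpRelV p B' v x₀'}) :
    LatEq B B' := by
  have : Fact p.Prime := ⟨hp⟩
  obtain ⟨⟨s, rfl⟩, -⟩ := hB
  obtain ⟨⟨s', rfl⟩, -⟩ := hB'
  obtain ⟨hx, hx'⟩ := hx₀
  have hmod := isZpSubmodule_zpSpanV (p := p) s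
  have hmod' := isZpSubmodule_zpSpanV (p := p) s'
  have hfib_iff : ∀ v : Fin (n + 1) → ℚ, v ≠ 0 →
      (ZpRelV p (zpSpanV p s) v x₀ ↔ ZpRelV p (zpSpanV p s') v x₀') := by
    have hscale : ∀ (C : Set (Fin (n + 1) → ℚ)) (y v : Fin (n + 1) → ℚ) (hv : v ≠ 0),
        (Projectivization.mk ℚ v hv ∈ {z : Projectivization ℚ (Fin (n + 1) → ℚ) |
          ∃ v, ∃ h : v ≠ 0, Projectivization.mk ℚ v h = z ∧ ZpRelV p C v y}) ↔
          ZpRelV p C v y := by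
      intro C y v hv
      refine ⟨?_, fun h => ⟨v, hv, rfl, h⟩⟩
      rintro ⟨w, hw, hwv, h⟩
      obtain ⟨c, rfl⟩ := (Projectivization.mk_eq_mk_iff' ℚ w v hw hv).1 hwv
      have hc : c ≠ 0 := (smul_ne_zero_iff.1 hw).1
      simpa [smul_smul, hc] using h.smul (inv_ne_zero hc) one_ne_zero
    intro v hv
    rw [← hscale _ x₀ v hv, hfib, hscale]
  have hzero : (0 : Fin (n + 1) → ℚ) ∈ pSMul p (zpSpanV p s) :=
    ⟨(0 : ℚ) • x₀, hmod.smul 0 (by simp) x₀ hx, by simp⟩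
  have hx0 : x₀ ≠ 0 := fun h => hx' (h ▸ hzero)
  have hrefl : ZpRelV p (zpSpanV p s) x₀ x₀ :=
    ⟨x₀, x₀, ⟨1, one_ne_zero, (one_smul _ _).symm⟩, ⟨1, one_ne_zero, (one_smul _ _).symm⟩,
      hx, hx', hx, hx', by simpa using hzero⟩
  have hrel := (hfib_iff x₀ hx0).1 hrefl
  have hfwd : ∀ v, v ≠ 0 → ZpRelV p (zpSpanV p s) v x₀ → ZpRelV p (zpSpanV p s') v x₀ :=
    fun v hv h => ((hfib_iff v hv).1 h).trans (hrel.symm hmod')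
  have hbwd : ∀ v, v ≠ 0 → ZpRelV p (zpSpanV p s') v x₀ → ZpRelV p (zpSpanV p s) v x₀ :=
    fun v hv h => (hfib_iff v hv).2 (h.trans hrel)
  obtain ⟨_, _, ⟨a, ha, rfl⟩, -, hax, hax', -⟩ := hrel
  have hinv : a⁻¹ • a • x₀ = x₀ := by rw [smul_smul, inv_mul_cancel₀ ha, one_smul]
  refine ⟨a, ha, Set.Subset.antisymm (fun b hb => ⟨a⁻¹ • b, ?_, ?_⟩) ?_⟩
  · refine smul_mem_of_zpRelV_imp hmod' hax hax' (inv_ne_zero ha) (hinv.symm ▸ hx)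
      (hinv.symm ▸ hx') (fun v hv h => ?_) hb
    have h1 : ZpRelV p (zpSpanV p s') v x₀ := by
      simpa [hinv] using h.smul one_ne_zero (inv_ne_zero ha)
    simpa using (hbwd v hv h1).smul one_ne_zero ha
  · simp [smul_smul, ha]
  · rintro _ ⟨b, hb, rfl⟩
    exact smul_mem_of_zpRelV_imp hmod hx hx' ha hax hax' hfwd hb
end

section
/- Let p be a prime, A a set, and let f: ℙ(ℚ³) → A be a map such that: (1) f takes exactly three values; (2) f takes at most two values on every projective line of ℙ(ℚ³); (3) for every projective line ℓ ⊂ ℙ(ℚ³), the restriction f|_ℓ is induced via some ℤ_(p)-lattice B′ in the underlying 2-dimensional ℚ-subspace from a flag map on the projective line ℙ(B′/pB′). Then there are exactly three equivalence classes of ℤ_(p)-lattices B ⊂ ℚ³ such that f is induced via B from a flag map f̄: ℙ(B/pB) → A. -/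
/- Common set-up for statements about projective spaces `ℙ(V)`: flag maps,
   `ℤ_(p)`-lattices and the associated reduction maps to `ℙ(B/pB)`
   (two nonzero vectors are identified by `ρ_B` iff suitable nonzero scalar
   multiples of them lie in `B ∖ pB` and are congruent modulo `pB`). -/

universe u v w

section PadicNormFacts

variable {p : ℕ}

theorem ne_zero_of_padicNorm_pos {a : ℚ} (h : 0 < padicNorm p a) : a ≠ 0 := by
  rintro rfl
  simp at h

variable [Fact p.Prime]

theorem not_dvd_den_iff_padicNorm_le_one (a : ℚ) : ¬ p ∣ a.den ↔ padicNorm p a ≤ 1 := by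
  constructor
  · intro h
    have := Padic.norm_rat_le_one (p := p) h
    rw [Padic.eq_padicNorm] at this
    exact_mod_cast this
  · intro h hd
    have hn : ¬ (p : ℤ) ∣ a.num := fun hn => by
      have h1 : p ∣ a.num.natAbs := Int.natCast_dvd.mp hn
      have h2 := Nat.dvd_gcd h1 hd
      rw [a.reduced] at h2
      exact (Fact.out : p.Prime).one_lt.ne' (Nat.dvd_one.mp h2)
    have h1 := (padicNorm.int_eq_one_iff (p := p) a.num).mpr hn
    have h2 := (padicNorm.nat_lt_one_iff (p := p) a.den).mpr hd
    have h3 : padicNorm p (a.num : ℚ) = padicNorm p a * padicNorm p (a.den : ℚ) := by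
      rw [← padicNorm.mul, Rat.mul_den_eq_num]
    have h4 := padicNorm.nonneg (p := p) a
    have h5 := padicNorm.nonneg (p := p) (a.den : ℚ)
    nlinarith

theorem padicNorm_pos {a : ℚ} (h : a ≠ 0) : 0 < padicNorm p a :=
  lt_of_le_of_ne (padicNorm.nonneg a) (padicNorm.nonzero h).symm

theorem prime_cast_ne_zero : (p : ℚ) ≠ 0 := Nat.cast_ne_zero.mpr (Fact.out : p.Prime).ne_zero

theorem padicNorm_le_prime_mul_of_lt {a b : ℚ} (h : padicNorm p a < padicNorm p b) :
    padicNorm p a ≤ padicNorm p (p * b) := by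
  have hp1 : (1 : ℚ) < p := by exact_mod_cast (Fact.out : p.Prime).one_lt
  have hb : b ≠ 0 := ne_zero_of_padicNorm_pos ((padicNorm.nonneg a).trans_lt h)
  by_cases ha : a = 0
  · subst ha
    rw [padicNorm.zero]
    exact padicNorm.nonneg _
  obtain ⟨m, hm⟩ := padicNorm.values_discrete (p := p) ha
  obtain ⟨n, hn⟩ := padicNorm.values_discrete (p := p) hb
  rw [padicNorm.mul, padicNorm.padicNorm_p_of_prime]
  rw [hm, hn] at h
  rw [hm, hn]
  have h1 : -m < -n := (zpow_lt_zpow_iff_right₀ hp1).mp h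
  rw [← zpow_neg_one, ← zpow_add₀ (by positivity)]
  exact zpow_le_zpow_right₀ hp1.le (by omega)

theorem padicNorm_prime_mul_lt {b : ℚ} (hb : b ≠ 0) :
    padicNorm p (p * b) < padicNorm p b := by
  rw [padicNorm.mul]
  have := padicNorm_pos (p := p) hb
  have := padicNorm.padicNorm_p_lt_one_of_prime (p := p)
  nlinarith

theorem padicNorm_add_le {a b t : ℚ} (ha : padicNorm p a ≤ t) (hb : padicNorm p b ≤ t) :
    padicNorm p (a + b) ≤ t :=
  padicNorm.nonarchimedean.trans (max_le ha hb)

theorem padicNorm_add_lt {a b t : ℚ} (ha : padicNorm p a < t) (hb : padicNorm p b < t) :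
    padicNorm p (a + b) < t :=
  padicNorm.nonarchimedean.trans_lt (max_lt ha hb)

theorem padicNorm_inv (a : ℚ) : padicNorm p a⁻¹ = (padicNorm p a)⁻¹ := by
  rw [← one_div, padicNorm.div, padicNorm.one, one_div]

theorem padicNorm_pow (a : ℚ) (k : ℕ) : padicNorm p (a ^ k) = padicNorm p a ^ k := by
  induction k with
  | zero => simp
  | succ k ih => rw [pow_succ, padicNorm.mul, ih, pow_succ]

theorem padicNorm_mul_le_one {a b : ℚ} (ha : padicNorm p a ≤ 1) (hb : padicNorm p b ≤ 1) :
    padicNorm p (a * b) ≤ 1 := by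
  rw [padicNorm.mul]
  exact mul_le_one₀ ha (padicNorm.nonneg b) hb

theorem padicNorm_prime_inv_mul_le_one {c : ℚ} (hc : padicNorm p c < 1) :
    padicNorm p ((p : ℚ)⁻¹ * c) ≤ 1 := by
  have h := padicNorm_le_prime_mul_of_lt (p := p) (a := c) (b := 1) (by simpa using hc)
  have hp0 := padicNorm_pos (p := p) (prime_cast_ne_zero (p := p))
  rw [mul_one] at h
  rw [padicNorm.mul, padicNorm_inv, inv_mul_le_one₀ hp0]
  exact h

end PadicNormFacts

section StableSets

variable {V : Type v} [AddCommGroup V] [Module ℚ V]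

/-- `B` is a `ℤ_(p)`-submodule. -/
def ZpStable (p : ℕ) (B : Set V) : Prop :=
  (0 : V) ∈ B ∧ (∀ x ∈ B, ∀ y ∈ B, x + y ∈ B) ∧
    ∀ c : ℚ, padicNorm p c ≤ 1 → ∀ x ∈ B, c • x ∈ B

variable {p : ℕ} {B : Set V}

theorem ZpStable.neg_mem (hB : ZpStable p B) {x : V} (hx : x ∈ B) : -x ∈ B := by
  have := hB.2.2 (-1) (by simp) x hx
  simpa using this

theorem ZpStable.sub_mem (hB : ZpStable p B) {x y : V} (hx : x ∈ B) (hy : y ∈ B) :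
    x - y ∈ B := by
  rw [sub_eq_add_neg]
  exact hB.2.1 _ hx _ (hB.neg_mem hy)

theorem zpRelV_smul_left_iff {s : ℚ} (hs : s ≠ 0) {x y : V} :
    ZpRelV p B (s • x) y ↔ ZpRelV p B x y := by
  constructor
  · rintro ⟨_, y', ⟨a, ha, rfl⟩, h⟩
    exact ⟨_, y', ⟨a * s, mul_ne_zero ha hs, (smul_smul a s x)⟩, h⟩
  · rintro ⟨_, y', ⟨a, ha, rfl⟩, h⟩
    refine ⟨_, y', ⟨a * s⁻¹, mul_ne_zero ha (inv_ne_zero hs), ?_⟩, h⟩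
    rw [smul_smul, mul_assoc, inv_mul_cancel₀ hs, mul_one]

theorem IsZpLatIn.subset {W : Submodule ℚ V} (hB : IsZpLatIn p W B) : B ⊆ W := by
  obtain ⟨_, rfl⟩ := hB
  exact Submodule.subset_span

variable [Fact p.Prime]

theorem mem_pSMul_iff {z : V} : z ∈ pSMul p B ↔ (p : ℚ)⁻¹ • z ∈ B := by
  have hp0 := prime_cast_ne_zero (p := p)
  constructor
  · rintro ⟨b, hb, rfl⟩
    rwa [inv_smul_smul₀ hp0]
  · intro h
    exact ⟨_, h, (smul_inv_smul₀ hp0 z).symm⟩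

theorem ZpStable.pSMul (hB : ZpStable p B) : ZpStable p (pSMul p B) := by
  refine ⟨mem_pSMul_iff.mpr (by simpa using hB.1), fun x hx y hy => ?_, fun c hc x hx => ?_⟩
  · rw [mem_pSMul_iff] at *
    rw [smul_add]
    exact hB.2.1 _ hx _ hy
  · rw [mem_pSMul_iff] at *
    rw [smul_comm]
    exact hB.2.2 c hc _ hx

theorem ZpStable.smul_mem_pSMul (hB : ZpStable p B) {c : ℚ} (hc : padicNorm p c < 1) {x : V}
    (hx : x ∈ B) : c • x ∈ _root_.pSMul p B := by
  rw [mem_pSMul_iff, smul_smul]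
  exact hB.2.2 _ (padicNorm_prime_inv_mul_le_one hc) _ hx

theorem ZpStable.pSMul_subset (hB : ZpStable p B) : _root_.pSMul p B ⊆ B := by
  rintro _ ⟨b, hb, rfl⟩
  exact hB.2.2 _ (padicNorm.of_nat p) _ hb

theorem ZpStable.padicNorm_eq_one (hB : ZpStable p B) {g : V} {a : ℚ}
    (hg : g ∈ B) (hg' : g ∉ _root_.pSMul p B) (ha : a • g ∈ B) (ha' : a • g ∉ _root_.pSMul p B) :
    padicNorm p a = 1 := by
  refine le_antisymm (not_lt.mp fun h => hg' ?_) (not_lt.mp fun h => ha' ?_)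
  · have ha0 : a ≠ 0 := ne_zero_of_padicNorm_pos (zero_lt_one.trans h)
    have := hB.smul_mem_pSMul (c := a⁻¹) (by rw [padicNorm_inv]; exact inv_lt_one_of_one_lt₀ h) ha
    rwa [inv_smul_smul₀ ha0] at this
  · exact hB.smul_mem_pSMul h hg

/-- For primitive vectors, equality of residue classes in `ℙ(B/pB)` is proportionality modulo
`pB`. -/
theorem ZpStable.zpRelV_iff (hB : ZpStable p B) {g h : V}
    (hg : g ∈ B) (hg' : g ∉ _root_.pSMul p B) (hh : h ∈ B) (hh' : h ∉ _root_.pSMul p B) :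
    ZpRelV p B g h ↔ ∃ c : ℚ, padicNorm p c ≤ 1 ∧ g - c • h ∈ _root_.pSMul p B := by
  constructor
  · rintro ⟨_, _, ⟨a, ha, rfl⟩, ⟨b, hb, rfl⟩, h1, h2, h3, h4, h5⟩
    have hna := hB.padicNorm_eq_one hg hg' h1 h2
    have hnb := hB.padicNorm_eq_one hh hh' h3 h4
    refine ⟨a⁻¹ * b, by simp [padicNorm.mul, padicNorm_inv, hna, hnb], ?_⟩
    have := hB.pSMul.2.2 a⁻¹ (by simp [padicNorm_inv, hna]) _ h5
    rwa [smul_sub, inv_smul_smul₀ ha, smul_smul] at this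
  · rintro ⟨c, hc, h1⟩
    have hc1 : c • h ∉ _root_.pSMul p B := fun h2 => hg' <| by
      simpa using hB.pSMul.2.1 _ h1 _ h2
    have hc0 : c ≠ 0 := by
      rintro rfl
      exact hc1 (by simpa using hB.pSMul.1)
    exact ⟨g, c • h, ⟨1, one_ne_zero, (one_smul _ _).symm⟩, ⟨c, hc0, rfl⟩, hg, hg',
      hB.2.2 _ hc _ hh, hc1, h1⟩

theorem zpStable_zpSpanV (s : Finset V) : ZpStable p (zpSpanV p s) := by
  refine ⟨⟨0, by simp [(Fact.out : p.Prime).ne_one], by simp⟩, ?_, ?_⟩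
  · rintro _ ⟨a, ha, rfl⟩ _ ⟨b, hb, rfl⟩
    refine ⟨a + b, fun t => ?_, by simp [add_smul, Finset.sum_add_distrib]⟩
    simp only [not_dvd_den_iff_padicNorm_le_one] at *
    exact padicNorm_add_le (ha t) (hb t)
  · rintro c hc _ ⟨a, ha, rfl⟩
    refine ⟨fun t => c * a t, fun t => ?_, by simp [Finset.smul_sum, mul_smul]⟩
    simp only [not_dvd_den_iff_padicNorm_le_one] at *
    exact padicNorm_mul_le_one hc (ha t)

theorem exists_padicNorm_smul_le_one (a : ℚ) : ∃ k : ℕ, padicNorm p ((p : ℚ) ^ k * a) ≤ 1 := by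
  have hp0 := padicNorm_pos (p := p) (prime_cast_ne_zero (p := p))
  by_cases ha : a = 0
  · exact ⟨0, by simp [ha]⟩
  obtain ⟨k, hk⟩ := exists_pow_lt_of_lt_one (inv_pos.mpr (padicNorm_pos (p := p) ha))
    (padicNorm.padicNorm_p_lt_one_of_prime (p := p))
  refine ⟨k, ?_⟩
  rw [padicNorm.mul, padicNorm_pow]
  have := padicNorm_pos (p := p) ha
  calc _ ≤ (padicNorm p a)⁻¹ * padicNorm p a := by gcongr
    _ = 1 := inv_mul_cancel₀ this.ne'

theorem padicNorm_prime_pow_le_one (k : ℕ) : padicNorm p ((p : ℚ) ^ k) ≤ 1 := by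
  exact_mod_cast padicNorm.of_nat (p := p) (p ^ k)

theorem ZpStable.exists_pow_smul_mem (hB : ZpStable p B) {v : V}
    (hv : v ∈ Submodule.span ℚ B) : ∃ k : ℕ, (p : ℚ) ^ k • v ∈ B := by
  induction hv using Submodule.span_induction with
  | mem x hx => exact ⟨0, by simpa using hx⟩
  | zero => exact ⟨0, by simpa using hB.1⟩
  | add x y _ _ hx hy =>
    obtain ⟨k, hk⟩ := hx
    obtain ⟨l, hl⟩ := hy
    refine ⟨k + l, ?_⟩
    rw [smul_add]
    refine hB.2.1 _ ?_ _ ?_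
    · rw [pow_add, mul_comm, mul_smul]
      exact hB.2.2 _ (padicNorm_prime_pow_le_one l) _ hk
    · rw [pow_add, mul_smul]
      exact hB.2.2 _ (padicNorm_prime_pow_le_one k) _ hl
  | smul a x _ hx =>
    obtain ⟨k, hk⟩ := hx
    obtain ⟨l, hl⟩ := exists_padicNorm_smul_le_one (p := p) a
    refine ⟨l + k, ?_⟩
    have := hB.2.2 _ hl _ hk
    rwa [smul_smul, show (p : ℚ) ^ l * a * p ^ k = p ^ (l + k) * a by ring, ← smul_smul] at this

theorem exists_inv_pow_smul_notMem_zpSpanV (s : Finset V) {v : V} (hv : v ≠ 0) :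
    ∃ k : ℕ, ((p : ℚ) ^ k)⁻¹ • v ∉ zpSpanV p s := by
  by_contra! hall
  obtain ⟨φ, hφ⟩ : ∃ φ : Module.Dual ℚ V, φ v ≠ 0 := by
    by_contra! h
    exact hv ((Module.forall_dual_apply_eq_zero_iff ℚ v).mp h)
  obtain ⟨M, hM0, hM⟩ : ∃ M : ℚ, 0 ≤ M ∧ ∀ t ∈ s, padicNorm p (φ t) ≤ M :=
    ⟨∑ t ∈ s, padicNorm p (φ t), Finset.sum_nonneg fun t _ => padicNorm.nonneg _, fun t ht =>
      Finset.single_le_sum (f := fun t => padicNorm p (φ t)) (fun t _ => padicNorm.nonneg _) ht⟩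
  have hbound : ∀ k : ℕ, padicNorm p (φ v) ≤ padicNorm p p ^ k * M := fun k => by
    obtain ⟨a, ha, hsum⟩ := hall k
    have h1 : padicNorm p (φ (((p : ℚ) ^ k)⁻¹ • v)) ≤ M := by
      rw [hsum, map_sum]
      refine padicNorm.sum_le' (fun t ht => ?_) hM0
      rw [map_smul, smul_eq_mul, padicNorm.mul]
      have := (not_dvd_den_iff_padicNorm_le_one (p := p) _).mp (ha t)
      calc _ ≤ 1 * padicNorm p (φ t) := by gcongr; exact padicNorm.nonneg _
        _ ≤ M := by simpa using hM t ht
    rw [map_smul, smul_eq_mul, padicNorm.mul, padicNorm_inv, padicNorm_pow] at h1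
    have h2 : 0 < padicNorm p p ^ k := pow_pos (padicNorm_pos (p := p) prime_cast_ne_zero) k
    rwa [inv_mul_le_iff₀ h2] at h1
  have hpos := padicNorm_pos (p := p) hφ
  obtain ⟨k, hk⟩ := exists_pow_lt_of_lt_one (show 0 < padicNorm p (φ v) / (M + 1) by positivity)
    (padicNorm.padicNorm_p_lt_one_of_prime (p := p))
  rw [lt_div_iff₀ (by positivity)] at hk
  have h2 : 0 < padicNorm p p ^ k := pow_pos (padicNorm_pos (p := p) prime_cast_ne_zero) k
  have := hbound k
  nlinarith

theorem IsZpLatIn.zpStable {W : Submodule ℚ V} (hB : IsZpLatIn p W B) : ZpStable p B := by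
  obtain ⟨⟨s, rfl⟩, _⟩ := hB
  exact zpStable_zpSpanV s

/-- Every nonzero vector has a primitive multiple. -/
theorem IsZpLatIn.exists_smul_mem {W : Submodule ℚ V} (hB : IsZpLatIn p W B) {v : V}
    (hv : v ∈ W) (hv0 : v ≠ 0) : ∃ a : ℚ, a ≠ 0 ∧ a • v ∈ B ∧ a • v ∉ pSMul p B := by
  have hst := hB.zpStable
  have hp0 := prime_cast_ne_zero (p := p)
  rw [← hB.2] at hv
  obtain ⟨k, hk⟩ := hst.exists_pow_smul_mem hv
  obtain ⟨⟨s, rfl⟩, _⟩ := hB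
  have hex := exists_inv_pow_smul_notMem_zpSpanV (p := p) s
    (smul_ne_zero (pow_ne_zero k hp0) hv0)
  classical
  obtain ⟨j, hj⟩ : ∃ j, Nat.find hex = j + 1 := by
    refine Nat.exists_eq_succ_of_ne_zero fun h => ?_
    have := Nat.find_spec hex
    rw [h] at this
    exact this (by simpa using hk)
  refine ⟨((p : ℚ) ^ j)⁻¹ * p ^ k, by positivity, ?_, ?_⟩
  · rw [mul_smul]
    exact not_not.mp (Nat.find_min hex (m := j) (by omega))
  · rw [mem_pSMul_iff, smul_smul, ← mul_assoc, ← mul_inv, ← pow_succ', mul_smul, ← hj]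
    exact Nat.find_spec hex

end StableSets

section PairSplit

variable {V : Type v} [AddCommGroup V] [Module ℚ V] {A : Type w}

/-- On the line through `u` and `v`, the map `F` is induced via the lattice `ℤ_(p) u + ℤ_(p) v`
from the flag map with distinguished point the class of `v`. -/
def PairSplit (p : ℕ) (F : V → A) (u v : V) : Prop :=
  (∀ x y : ℚ, x ≠ 0 → padicNorm p y ≤ padicNorm p x → F (x • u + y • v) = F u) ∧
    ∀ x y : ℚ, padicNorm p x < padicNorm p y → F (x • u + y • v) = F v

variable {p : ℕ} {F : V → A} {u v : V}

theorem PairSplit.smul (h : PairSplit p F u v) (hF : ∀ c : ℚ, c ≠ 0 → ∀ v, F (c • v) = F v)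
    {s : ℚ} (hs : s ≠ 0) : PairSplit p F (s • u) (s • v) := by
  constructor
  · intro x y hx hxy
    rw [smul_comm x, smul_comm y, ← smul_add, hF s hs, hF s hs]
    exact h.1 x y hx hxy
  · intro x y hxy
    rw [smul_comm x, smul_comm y, ← smul_add, hF s hs, hF s hs]
    exact h.2 x y hxy

variable [Fact p.Prime]

theorem PairSplit.of_normalized (hF : ∀ c : ℚ, c ≠ 0 → ∀ v, F (c • v) = F v)
    (h1 : ∀ y : ℚ, padicNorm p y ≤ 1 → F (u + y • v) = F u)
    (h2 : ∀ x : ℚ, padicNorm p x < 1 → F (x • u + v) = F v) : PairSplit p F u v := by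
  constructor
  · intro x y hx hxy
    have hpos := padicNorm_pos (p := p) hx
    rw [← h1 (x⁻¹ * y), ← hF x hx (u + _), smul_add, smul_smul, mul_inv_cancel_left₀ hx]
    rwa [padicNorm.mul, padicNorm_inv, inv_mul_le_one₀ hpos]
  · intro x y hxy
    have hpos := (padicNorm.nonneg _).trans_lt hxy
    have hy := ne_zero_of_padicNorm_pos hpos
    rw [← h2 (y⁻¹ * x), ← hF y hy (_ + v), smul_add, smul_smul, mul_inv_cancel_left₀ hy]
    rwa [padicNorm.mul, padicNorm_inv, inv_mul_lt_one₀ hpos]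

theorem PairSplit.swap (h : PairSplit p F u v) (hF : ∀ c : ℚ, c ≠ 0 → ∀ v, F (c • v) = F v) :
    PairSplit p F v ((p : ℚ) • u) := by
  constructor
  · intro x y hx hxy
    rw [smul_smul, add_comm]
    apply h.2
    by_cases hy : y = 0
    · simpa [hy] using padicNorm_pos hx
    · rw [mul_comm]
      exact (padicNorm_prime_mul_lt hy).trans_le hxy
  · intro x y hxy
    have hy := ne_zero_of_padicNorm_pos ((padicNorm.nonneg _).trans_lt hxy)
    rw [smul_smul, add_comm, hF p prime_cast_ne_zero, mul_comm]
    exact h.1 _ _ (mul_ne_zero prime_cast_ne_zero hy) (padicNorm_le_prime_mul_of_lt hxy)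

theorem PairSplit.congr_right {c d : ℚ} (h : PairSplit p F u (c • v))
    (hF : ∀ c : ℚ, c ≠ 0 → ∀ v, F (c • v) = F v) (hc : c ≠ 0) (hd : d ≠ 0)
    (hcd : padicNorm p c = padicNorm p d) : PairSplit p F u (d • v) := by
  have key : ∀ y : ℚ, y • d • v = (y * (d / c)) • c • v := fun y => by
    rw [smul_smul, smul_smul]
    congr 1
    field_simp
  have hn : ∀ y : ℚ, padicNorm p (y * (d / c)) = padicNorm p y := fun y => by
    rw [padicNorm.mul, padicNorm.div, hcd, div_self (padicNorm.nonzero hd), mul_one]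
  constructor
  · intro x y hx hxy
    rw [key]
    exact h.1 _ _ hx (by rwa [hn])
  · intro x y hxy
    rw [key, hF d hd, ← hF c hc v]
    exact h.2 _ _ (by rwa [hn])

theorem PairSplit.padicNorm_eq (h : PairSplit p F u v) {s t : ℚ} (hs : s ≠ 0) (ht : t ≠ 0)
    (h' : PairSplit p F (s • u) (t • v)) (hF : ∀ c : ℚ, c ≠ 0 → ∀ v, F (c • v) = F v)
    (huv : F u ≠ F v) : padicNorm p s = padicNorm p t := by
  have e1 : (1 : ℚ) • s • u + (1 : ℚ) • t • v = s • u + t • v := by simp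
  have e2 : s⁻¹ • s • u + t⁻¹ • t • v = (1 : ℚ) • u + (1 : ℚ) • v := by
    rw [inv_smul_smul₀ hs, inv_smul_smul₀ ht, one_smul, one_smul]
  refine le_antisymm (not_lt.mp fun hlt => ?_) (not_lt.mp fun hlt => ?_)
  · have h1 := h'.2 s⁻¹ t⁻¹ (by
      rw [padicNorm_inv, padicNorm_inv]
      exact inv_strictAnti₀ (padicNorm_pos ht) hlt)
    rw [e2, h.1 1 1 one_ne_zero le_rfl, hF t ht] at h1
    exact huv h1
  · have h1 := h'.1 1 1 one_ne_zero le_rfl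
    rw [e1, h.2 s t hlt, hF s hs] at h1
    exact huv h1.symm

theorem PairSplit.padicNorm_eq_of_swap (h : PairSplit p F u v) {s t : ℚ} (hs : s ≠ 0)
    (ht : t ≠ 0) (h' : PairSplit p F (t • v) (s • u))
    (hF : ∀ c : ℚ, c ≠ 0 → ∀ v, F (c • v) = F v) (huv : F u ≠ F v) :
    padicNorm p s = padicNorm p p * padicNorm p t := by
  have h1 := (h.swap hF).padicNorm_eq (s := t) (t := s * (p : ℚ)⁻¹) ht
    (mul_ne_zero hs (inv_ne_zero prime_cast_ne_zero))
    (by rwa [smul_smul, inv_mul_cancel_right₀ prime_cast_ne_zero]) hF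
    (by rw [hF p prime_cast_ne_zero]; exact huv.symm)
  have hp0 : padicNorm p (p : ℚ) ≠ 0 := padicNorm.nonzero prime_cast_ne_zero
  rw [h1, padicNorm.mul, padicNorm_inv]
  field_simp

variable {B : Set V}

/-- A pair of primitive vectors, only the second of which lies in the residue class of `q`. -/
theorem PairSplit.of_zpRelV (hF : ∀ c : ℚ, c ≠ 0 → ∀ v, F (c • v) = F v) (hB : ZpStable p B)
    (hind : ∀ x y, x ∈ B → x ∉ pSMul p B → y ∈ pSMul p B → F (x + y) = F x) {g₁ g₂ q : V}
    (hg₁ : g₁ ∈ B) (hg₁' : g₁ ∉ pSMul p B) (hg₂ : g₂ ∈ B) (hg₂' : g₂ ∉ pSMul p B)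
    (hq : q ∈ B) (hq' : q ∉ pSMul p B) (hr₁ : ¬ ZpRelV p B g₁ q) (hr₂ : ZpRelV p B g₂ q)
    (hoff : ∀ y : ℚ, padicNorm p y ≤ 1 → g₁ + y • g₂ ∈ B → g₁ + y • g₂ ∉ pSMul p B →
      ¬ ZpRelV p B (g₁ + y • g₂) q → F (g₁ + y • g₂) = F g₁) : PairSplit p F g₁ g₂ := by
  obtain ⟨d, hd, hdq⟩ := (hB.zpRelV_iff hg₂ hg₂' hq hq').mp hr₂
  rw [hB.zpRelV_iff hg₁ hg₁' hq hq'] at hr₁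
  have key : ∀ y c : ℚ, padicNorm p y ≤ 1 → padicNorm p c ≤ 1 →
      (g₁ + y • g₂) - c • q ∉ pSMul p B := fun y c hy hc hmem => hr₁ <| by
    refine ⟨c + -(y * d), padicNorm_add_le hc ?_, ?_⟩
    · rw [padicNorm.neg]
      exact padicNorm_mul_le_one hy hd
    · have := hB.pSMul.sub_mem hmem (hB.pSMul.2.2 y hy _ hdq)
      convert this using 1
      module
  refine PairSplit.of_normalized hF (fun y hy => ?_) fun x hx => ?_
  · have h1 : g₁ + y • g₂ ∈ B := hB.2.1 _ hg₁ _ (hB.2.2 _ hy _ hg₂)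
    have h2 : g₁ + y • g₂ ∉ pSMul p B := fun h => key y 0 hy (by simp) (by simpa using h)
    refine hoff y hy h1 h2 fun h => ?_
    obtain ⟨c, hc, hcq⟩ := (hB.zpRelV_iff h1 h2 hq hq').mp h
    exact key y c hy hc hcq
  · rw [add_comm]
    exact hind _ _ hg₂ hg₂' (hB.smul_mem_pSMul hx hg₁)

theorem PairSplit.of_notMem (hF : ∀ c : ℚ, c ≠ 0 → ∀ v, F (c • v) = F v) (hB : ZpStable p B)
    (hind : ∀ x y, x ∈ B → x ∉ pSMul p B → y ∈ pSMul p B → F (x + y) = F x) {g₁ g₂ : V}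
    {L : Set V} (hL : ZpStable p L) (hLB : L ⊆ B)
    (hg₁ : g₁ ∈ B) (hg₁' : g₁ ∉ L) (hg₂ : g₂ ∈ L) (hg₂' : g₂ ∉ pSMul p B)
    (hoff : ∀ x y, x ∈ B → x ∉ L → y ∈ B → y ∉ L → F x = F y) : PairSplit p F g₁ g₂ := by
  refine PairSplit.of_normalized hF (fun y hy => ?_) fun x hx => ?_
  · have h1 : y • g₂ ∈ L := hL.2.2 _ hy _ hg₂
    refine hoff _ _ (hB.2.1 _ hg₁ _ (hLB h1)) (fun h => hg₁' ?_) hg₁ hg₁'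
    simpa using hL.sub_mem h h1
  · rw [add_comm]
    exact hind _ _ (hLB hg₂) hg₂' (hB.smul_mem_pSMul hx hg₁)

end PairSplit

section FlagBases

variable {V : Type v} [AddCommGroup V] [Module ℚ V] {A : Type w}

/-- The `ℤ_(p)`-span of three vectors. -/
def zpSpanThree (p : ℕ) (e₁ e₂ e₃ : V) : Set V :=
  {v | ∃ x y z : ℚ, padicNorm p x ≤ 1 ∧ padicNorm p y ≤ 1 ∧ padicNorm p z ≤ 1 ∧
    v = x • e₁ + y • e₂ + z • e₃}

/-- `(g₁, g₂, g₃)` is a basis of `B` adapted to the flag of which `F` is induced on every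
coordinate line. -/
def FlagBasis (p : ℕ) (F : V → A) (B : Set V) (g₁ g₂ g₃ : V) : Prop :=
  B = zpSpanThree p g₁ g₂ g₃ ∧ PairSplit p F g₁ g₂ ∧ PairSplit p F g₁ g₃ ∧ PairSplit p F g₂ g₃

variable {p : ℕ} [Fact p.Prime] {F : V → A} {B : Set V} {q w : V}

theorem ZpStable.resLineV (hB : ZpStable p B) : ZpStable p (resLineV p B q w) := by
  simp only [ZpStable, _root_.resLineV, Set.mem_ofPred_eq, not_dvd_den_iff_padicNorm_le_one]
  refine ⟨⟨0, 0, by simp, by simp, 0, hB.pSMul.1, by simp⟩, ?_, ?_⟩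
  · rintro _ ⟨a, b, ha, hb, y, hy, rfl⟩ _ ⟨a', b', ha', hb', y', hy', rfl⟩
    exact ⟨a + a', b + b', padicNorm_add_le ha ha', padicNorm_add_le hb hb', y + y',
      hB.pSMul.2.1 _ hy _ hy', by module⟩
  · rintro c hc _ ⟨a, b, ha, hb, y, hy, rfl⟩
    exact ⟨c * a, c * b, padicNorm_mul_le_one hc ha, padicNorm_mul_le_one hc hb, c • y,
      hB.pSMul.2.2 _ hc _ hy, by module⟩

theorem ZpStable.resLineV_subset (hB : ZpStable p B) (hq : q ∈ B) (hw : w ∈ B) :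
    _root_.resLineV p B q w ⊆ B := by
  simp only [_root_.resLineV, not_dvd_den_iff_padicNorm_le_one]
  rintro _ ⟨a, b, ha, hb, y, hy, rfl⟩
  exact hB.2.1 _ (hB.2.1 _ (hB.2.2 _ ha _ hq) _ (hB.2.2 _ hb _ hw)) _ (hB.pSMul_subset hy)

theorem pSMul_subset_resLineV : pSMul p B ⊆ resLineV p B q w := fun y hy =>
  ⟨0, 0, by simp [(Fact.out : p.Prime).ne_one], by simp [(Fact.out : p.Prime).ne_one], y, hy,
    by simp⟩

theorem smul_mem_resLineV (hB : ZpStable p B) {c : ℚ} (hc : padicNorm p c ≤ 1) :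
    c • q ∈ resLineV p B q w :=
  ⟨c, 0, (not_dvd_den_iff_padicNorm_le_one c).mpr hc, by simp [(Fact.out : p.Prime).ne_one], 0,
    hB.pSMul.1, by simp⟩

theorem mem_resLineV_of_zpRelV (hB : ZpStable p B) {g : V} (hg : g ∈ B) (hg' : g ∉ pSMul p B)
    (hq : q ∈ B) (hq' : q ∉ pSMul p B) (h : ZpRelV p B g q) : g ∈ resLineV p B q w := by
  obtain ⟨c, hc, hcq⟩ := (hB.zpRelV_iff hg hg' hq hq').mp h
  have := hB.resLineV.2.1 _ (pSMul_subset_resLineV (q := q) (w := w) hcq) _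
    (smul_mem_resLineV (w := w) hB hc)
  simpa using this

/-- Vectors lying in the successive strata of a residue flag are independent modulo `p`. -/
theorem padicNorm_lt_one_of_mem_pSMul (hB : ZpStable p B) {L : Set V} (hL : ZpStable p L)
    (hpL : pSMul p B ⊆ L) {g₁ g₂ g₃ : V} (hq : q ∈ B) (hq' : q ∉ pSMul p B)
    (h₁ : g₁ ∈ B) (h₁' : g₁ ∉ L) (h₂ : g₂ ∈ L) (h₂B : g₂ ∈ B) (h₂' : g₂ ∉ pSMul p B)
    (hr₂ : ¬ ZpRelV p B g₂ q) (h₃ : g₃ ∈ L) (h₃B : g₃ ∈ B) (h₃' : g₃ ∉ pSMul p B)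
    (hr₃ : ZpRelV p B g₃ q) {x y z : ℚ} (hx : padicNorm p x ≤ 1) (hy : padicNorm p y ≤ 1)
    (hz : padicNorm p z ≤ 1) (h : x • g₁ + y • g₂ + z • g₃ ∈ pSMul p B) :
    padicNorm p x < 1 ∧ padicNorm p y < 1 ∧ padicNorm p z < 1 := by
  have hinv : ∀ c : ℚ, padicNorm p c ≤ 1 → ¬ padicNorm p c < 1 →
      c ≠ 0 ∧ padicNorm p c⁻¹ ≤ 1 := fun c hc hc' => by
    have : padicNorm p c = 1 := le_antisymm hc (not_lt.mp hc')
    exact ⟨ne_zero_of_padicNorm_pos (p := p) (by rw [this]; exact one_pos),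
      by rw [padicNorm_inv, this, inv_one]⟩
  have hx1 : padicNorm p x < 1 := by
    by_contra hlt
    obtain ⟨hx0, hxi⟩ := hinv x hx hlt
    refine h₁' ?_
    have h4 := hL.2.2 _ hxi _ (hL.sub_mem (hpL h)
      (hL.2.1 _ (hL.2.2 _ hy _ h₂) _ (hL.2.2 _ hz _ h₃)))
    rwa [add_assoc, add_sub_cancel_right, inv_smul_smul₀ hx0] at h4
  have h' : y • g₂ + z • g₃ ∈ pSMul p B := by
    have := hB.pSMul.sub_mem h (hB.smul_mem_pSMul hx1 h₁)
    rwa [add_assoc, add_sub_cancel_left] at this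
  have hy1 : padicNorm p y < 1 := by
    by_contra hlt
    obtain ⟨hy0, hyi⟩ := hinv y hy hlt
    obtain ⟨d, hd, hdq⟩ := (hB.zpRelV_iff h₃B h₃' hq hq').mp hr₃
    refine hr₂ ((hB.zpRelV_iff h₂B h₂' hq hq').mpr ⟨-(y⁻¹ * z * d), ?_, ?_⟩)
    · rw [padicNorm.neg]
      exact padicNorm_mul_le_one (padicNorm_mul_le_one hyi hz) hd
    · have h5 := hB.pSMul.2.2 _ hyi _ (hB.pSMul.sub_mem h' (hB.pSMul.2.2 _ hz _ hdq))
      convert h5 using 1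
      rw [smul_sub, smul_add, inv_smul_smul₀ hy0]
      module
  refine ⟨hx1, hy1, ?_⟩
  by_contra hlt
  obtain ⟨hz0, hzi⟩ := hinv z hz hlt
  have := hB.pSMul.2.2 _ hzi _ (hB.pSMul.sub_mem h' (hB.smul_mem_pSMul hy1 h₂B))
  rw [add_sub_cancel_left, inv_smul_smul₀ hz0] at this
  exact h₃' this

theorem eq_zpSpanThree_of_independent (hB : ZpStable p B) {g₁ g₂ g₃ : V} (h₁ : g₁ ∈ B)
    (h₂ : g₂ ∈ B) (h₃ : g₃ ∈ B) (hspan : ∀ v : V, ∃ x y z : ℚ, v = x • g₁ + y • g₂ + z • g₃)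
    (hindep : ∀ x y z : ℚ, padicNorm p x ≤ 1 → padicNorm p y ≤ 1 → padicNorm p z ≤ 1 →
      x • g₁ + y • g₂ + z • g₃ ∈ pSMul p B →
      padicNorm p x < 1 ∧ padicNorm p y < 1 ∧ padicNorm p z < 1) :
    B = zpSpanThree p g₁ g₂ g₃ := by
  refine Set.Subset.antisymm (fun v hv => ?_) ?_
  · obtain ⟨x, y, z, rfl⟩ := hspan v
    have key : ∀ m : ℚ, padicNorm p x ≤ padicNorm p m → padicNorm p y ≤ padicNorm p m →
        padicNorm p z ≤ padicNorm p m → (m = x ∨ m = y ∨ m = z) → padicNorm p m ≤ 1 := by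
      intro m hx hy hz hm
      by_contra! hlt
      have hm0 := zero_lt_one.trans hlt
      have hle : ∀ c : ℚ, padicNorm p c ≤ padicNorm p m → padicNorm p (m⁻¹ * c) ≤ 1 :=
        fun c hc => by rwa [padicNorm.mul, padicNorm_inv, inv_mul_le_one₀ hm0]
      have hmem := hB.smul_mem_pSMul (c := m⁻¹)
        (by rw [padicNorm_inv]; exact inv_lt_one_of_one_lt₀ hlt) hv
      rw [smul_add, smul_add, smul_smul, smul_smul, smul_smul] at hmem
      obtain ⟨h1, h2, h3⟩ := hindep _ _ _ (hle x hx) (hle y hy) (hle z hz) hmem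
      have hmm : padicNorm p (m⁻¹ * m) = 1 := by
        rw [inv_mul_cancel₀ (ne_zero_of_padicNorm_pos hm0), padicNorm.one]
      rcases hm with rfl | rfl | rfl <;> linarith
    obtain ⟨m, hx, hy, hz, hm⟩ : ∃ m : ℚ, padicNorm p x ≤ padicNorm p m ∧
        padicNorm p y ≤ padicNorm p m ∧ padicNorm p z ≤ padicNorm p m ∧
        (m = x ∨ m = y ∨ m = z) := by
      rcases le_total (padicNorm p x) (padicNorm p y) with hxy | hxy
      · rcases le_total (padicNorm p y) (padicNorm p z) with hyz | hyz
        · exact ⟨z, hxy.trans hyz, hyz, le_rfl, by simp⟩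
        · exact ⟨y, hxy, le_rfl, hyz, by simp⟩
      · rcases le_total (padicNorm p x) (padicNorm p z) with hxz | hxz
        · exact ⟨z, hxz, hxy.trans hxz, le_rfl, by simp⟩
        · exact ⟨x, le_rfl, hxy, hxz, by simp⟩
    have hm1 := key m hx hy hz hm
    exact ⟨x, y, z, hx.trans hm1, hy.trans hm1, hz.trans hm1, rfl⟩
  · rintro _ ⟨x, y, z, hx, hy, hz, rfl⟩
    exact hB.2.1 _ (hB.2.1 _ (hB.2.2 _ hx _ h₁) _ (hB.2.2 _ hy _ h₂)) _ (hB.2.2 _ hz _ h₃)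

end FlagBases

section Strata

variable {V : Type v} [AddCommGroup V] [Module ℚ V] {A : Type w}

/-- `F` is induced via `B` from a flag map on the residue plane, with flag given by the class of
`q` and the residue line through `q` and `w`. -/
structure ResidueFlag (p : ℕ) (F : V → A) (B : Set V) (q w : V) : Prop where
  stable : ZpStable p B
  smul : ∀ c : ℚ, c ≠ 0 → ∀ v, F (c • v) = F v
  ind : ∀ x y, x ∈ B → x ∉ pSMul p B → y ∈ pSMul p B → F (x + y) = F x
  mem_q : q ∈ B
  notMem_q : q ∉ pSMul p B
  mem_w : w ∈ B
  rel : ∀ x, x ∈ B → x ∉ pSMul p B → ZpRelV p B x q → F x = F q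
  off : ∀ x y, x ∈ B → x ∉ resLineV p B q w → y ∈ B → y ∉ resLineV p B q w → F x = F y
  on : ∀ x y, x ∈ resLineV p B q w → x ∉ pSMul p B → ¬ ZpRelV p B x q →
    y ∈ resLineV p B q w → y ∉ pSMul p B → ¬ ZpRelV p B y q → F x = F y

/-- Every vector is a rational combination of `e₁`, `e₂`, `e₃`. -/
def SpansThree (e₁ e₂ e₃ : V) : Prop :=
  ∀ v : V, ∃ x y z : ℚ, v = x • e₁ + y • e₂ + z • e₃

variable {e₁ e₂ e₃ : V}

theorem SpansThree.smul (h : SpansThree e₁ e₂ e₃) {s₁ s₂ s₃ : ℚ} (h₁ : s₁ ≠ 0) (h₂ : s₂ ≠ 0)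
    (h₃ : s₃ ≠ 0) : SpansThree (s₁ • e₁) (s₂ • e₂) (s₃ • e₃) := fun v => by
  obtain ⟨x, y, z, rfl⟩ := h v
  refine ⟨x / s₁, y / s₂, z / s₃, ?_⟩
  simp only [smul_smul, div_mul_cancel₀ _ h₁, div_mul_cancel₀ _ h₂, div_mul_cancel₀ _ h₃]

theorem SpansThree.rotate (h : SpansThree e₁ e₂ e₃) : SpansThree e₂ e₃ e₁ := fun v => by
  obtain ⟨x, y, z, rfl⟩ := h v
  exact ⟨y, z, x, by module⟩

theorem SpansThree.swap (h : SpansThree e₁ e₂ e₃) : SpansThree e₂ e₁ e₃ := fun v => by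
  obtain ⟨x, y, z, rfl⟩ := h v
  exact ⟨y, x, z, by module⟩

variable {p : ℕ} [Fact p.Prime] {F : V → A} {B : Set V} {q w : V}

theorem ResidueFlag.flagBasis (h : ResidueFlag p F B q w) {g₁ g₂ g₃ : V}
    (h₁ : g₁ ∈ B ∧ g₁ ∉ resLineV p B q w)
    (h₂ : g₂ ∈ resLineV p B q w ∧ g₂ ∉ pSMul p B ∧ ¬ ZpRelV p B g₂ q)
    (h₃ : g₃ ∈ B ∧ g₃ ∉ pSMul p B ∧ ZpRelV p B g₃ q) (hspan : SpansThree g₁ g₂ g₃) :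
    FlagBasis p F B g₁ g₂ g₃ := by
  have hL : ZpStable p (resLineV p B q w) := h.stable.resLineV
  have hLB := h.stable.resLineV_subset h.mem_q h.mem_w
  have h₃L : g₃ ∈ resLineV p B q w :=
    mem_resLineV_of_zpRelV h.stable h₃.1 h₃.2.1 h.mem_q h.notMem_q h₃.2.2
  refine ⟨?_, ?_, ?_, ?_⟩
  · exact eq_zpSpanThree_of_independent h.stable h₁.1 (hLB h₂.1) h₃.1 hspan
      fun x y z hx hy hz hmem => padicNorm_lt_one_of_mem_pSMul h.stable hL pSMul_subset_resLineV
        h.mem_q h.notMem_q h₁.1 h₁.2 h₂.1 (hLB h₂.1) h₂.2.1 h₂.2.2 h₃L h₃.1 h₃.2.1 h₃.2.2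
        hx hy hz hmem
  · exact PairSplit.of_notMem h.smul h.stable h.ind hL hLB h₁.1 h₁.2 h₂.1 h₂.2.1 h.off
  · exact PairSplit.of_notMem h.smul h.stable h.ind hL hLB h₁.1 h₁.2 h₃L h₃.2.1 h.off
  · exact PairSplit.of_zpRelV h.smul h.stable h.ind (hLB h₂.1) h₂.2.1 h₃.1 h₃.2.1 h.mem_q
      h.notMem_q h₂.2.2 h₃.2.2 fun y hy _ hp hr =>
        h.on _ _ (hL.2.1 _ h₂.1 _ (hL.2.2 _ hy _ h₃L)) hp hr h₂.1 h₂.2.1 h₂.2.2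

/-- Three spanning vectors of different colours can be rescaled to a basis of `B` adapted to the
flag, in a suitable order. -/
theorem ResidueFlag.exists_flagBasis (h : ResidueFlag p F B q w)
    (hscale : ∀ v : V, v ≠ 0 → ∃ a : ℚ, a ≠ 0 ∧ a • v ∈ B ∧ a • v ∉ pSMul p B)
    (h₁ : e₁ ≠ 0) (h₂ : e₂ ≠ 0) (h₃ : e₃ ≠ 0) (hspan : SpansThree e₁ e₂ e₃)
    (h₁₂ : F e₁ ≠ F e₂) (h₁₃ : F e₁ ≠ F e₃) (h₂₃ : F e₂ ≠ F e₃) :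
    ∃ s₁ s₂ s₃ : ℚ, s₁ ≠ 0 ∧ s₂ ≠ 0 ∧ s₃ ≠ 0 ∧
      (FlagBasis p F B (s₁ • e₁) (s₂ • e₂) (s₃ • e₃) ∨
        FlagBasis p F B (s₁ • e₁) (s₃ • e₃) (s₂ • e₂) ∨
        FlagBasis p F B (s₂ • e₂) (s₁ • e₁) (s₃ • e₃) ∨
        FlagBasis p F B (s₂ • e₂) (s₃ • e₃) (s₁ • e₁) ∨
        FlagBasis p F B (s₃ • e₃) (s₁ • e₁) (s₂ • e₂) ∨
        FlagBasis p F B (s₃ • e₃) (s₂ • e₂) (s₁ • e₁)) := by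
  obtain ⟨s₁, hs₁, hm₁, hn₁⟩ := hscale e₁ h₁
  obtain ⟨s₂, hs₂, hm₂, hn₂⟩ := hscale e₂ h₂
  obtain ⟨s₃, hs₃, hm₃, hn₃⟩ := hscale e₃ h₃
  have hsp := hspan.smul hs₁ hs₂ hs₃
  refine ⟨s₁, s₂, s₃, hs₁, hs₂, hs₃, ?_⟩
  rw [← h.smul s₁ hs₁ e₁, ← h.smul s₂ hs₂ e₂] at h₁₂
  rw [← h.smul s₁ hs₁ e₁, ← h.smul s₃ hs₃ e₃] at h₁₃
  rw [← h.smul s₂ hs₂ e₂, ← h.smul s₃ hs₃ e₃] at h₂₃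
  generalize s₁ • e₁ = g₁ at *
  generalize s₂ • e₂ = g₂ at *
  generalize s₃ • e₃ = g₃ at *
  have strat : ∀ g, g ∈ B → g ∉ pSMul p B → (g ∈ B ∧ g ∉ resLineV p B q w) ∨
      (g ∈ resLineV p B q w ∧ g ∉ pSMul p B ∧ ¬ ZpRelV p B g q) ∨
      (g ∈ B ∧ g ∉ pSMul p B ∧ ZpRelV p B g q) := by tauto
  have same₁ : ∀ g g', (g ∈ B ∧ g ∉ resLineV p B q w) → (g' ∈ B ∧ g' ∉ resLineV p B q w) →
      F g = F g' := fun g g' hg hg' => h.off _ _ hg.1 hg.2 hg'.1 hg'.2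
  have same₂ : ∀ g g', (g ∈ resLineV p B q w ∧ g ∉ pSMul p B ∧ ¬ ZpRelV p B g q) →
      (g' ∈ resLineV p B q w ∧ g' ∉ pSMul p B ∧ ¬ ZpRelV p B g' q) → F g = F g' :=
    fun g g' hg hg' => h.on _ _ hg.1 hg.2.1 hg.2.2 hg'.1 hg'.2.1 hg'.2.2
  have same₃ : ∀ g g', (g ∈ B ∧ g ∉ pSMul p B ∧ ZpRelV p B g q) →
      (g' ∈ B ∧ g' ∉ pSMul p B ∧ ZpRelV p B g' q) → F g = F g' :=
    fun g g' hg hg' => (h.rel _ hg.1 hg.2.1 hg.2.2).trans (h.rel _ hg'.1 hg'.2.1 hg'.2.2).symm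
  rcases strat g₁ hm₁ hn₁ with k₁ | k₁ | k₁ <;> rcases strat g₂ hm₂ hn₂ with k₂ | k₂ | k₂
  · exact absurd (same₁ _ _ k₁ k₂) h₁₂
  · rcases strat g₃ hm₃ hn₃ with k₃ | k₃ | k₃
    · exact absurd (same₁ _ _ k₁ k₃) h₁₃
    · exact absurd (same₂ _ _ k₂ k₃) h₂₃
    · exact Or.inl (h.flagBasis k₁ k₂ k₃ hsp)
  · rcases strat g₃ hm₃ hn₃ with k₃ | k₃ | k₃
    · exact absurd (same₁ _ _ k₁ k₃) h₁₃
    · exact Or.inr (Or.inl (h.flagBasis k₁ k₃ k₂ hsp.swap.rotate))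
    · exact absurd (same₃ _ _ k₂ k₃) h₂₃
  · rcases strat g₃ hm₃ hn₃ with k₃ | k₃ | k₃
    · exact absurd (same₁ _ _ k₂ k₃) h₂₃
    · exact absurd (same₂ _ _ k₁ k₃) h₁₃
    · exact Or.inr (Or.inr (Or.inl (h.flagBasis k₂ k₁ k₃ hsp.swap)))
  · exact absurd (same₂ _ _ k₁ k₂) h₁₂
  · rcases strat g₃ hm₃ hn₃ with k₃ | k₃ | k₃
    · exact Or.inr (Or.inr (Or.inr (Or.inr (Or.inl
        (h.flagBasis k₃ k₁ k₂ hsp.rotate.rotate)))))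
    · exact absurd (same₂ _ _ k₁ k₃) h₁₃
    · exact absurd (same₃ _ _ k₂ k₃) h₂₃
  · rcases strat g₃ hm₃ hn₃ with k₃ | k₃ | k₃
    · exact absurd (same₁ _ _ k₂ k₃) h₂₃
    · exact Or.inr (Or.inr (Or.inr (Or.inl (h.flagBasis k₂ k₃ k₁ hsp.rotate))))
    · exact absurd (same₃ _ _ k₁ k₃) h₁₃
  · rcases strat g₃ hm₃ hn₃ with k₃ | k₃ | k₃
    · exact Or.inr (Or.inr (Or.inr (Or.inr (Or.inr
        (h.flagBasis k₃ k₂ k₁ hsp.rotate.swap)))))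
    · exact absurd (same₂ _ _ k₂ k₃) h₂₃
    · exact absurd (same₃ _ _ k₁ k₃) h₁₃
  · exact absurd (same₃ _ _ k₁ k₂) h₁₂

end Strata

section Adapted

variable {V : Type v} [AddCommGroup V] [Module ℚ V] {A : Type w}

/-- A basis of differently coloured vectors splitting `F` on all coordinate lines, compatibly with
the order of the basis. -/
structure AdaptedBasis (p : ℕ) (F : V → A) (e₁ e₂ e₃ : V) : Prop where
  indep : ∀ x y z : ℚ, x • e₁ + y • e₂ + z • e₃ = 0 → x = 0 ∧ y = 0 ∧ z = 0
  span : SpansThree e₁ e₂ e₃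
  ne₁₂ : F e₁ ≠ F e₂
  ne₁₃ : F e₁ ≠ F e₃
  ne₂₃ : F e₂ ≠ F e₃
  split₁₂ : PairSplit p F e₁ e₂
  split₁₃ : PairSplit p F e₁ e₃
  split₂₃ : PairSplit p F e₂ e₃

variable {p : ℕ} {F : V → A} {e₁ e₂ e₃ : V}

theorem AdaptedBasis.rotate [Fact p.Prime] (h : AdaptedBasis p F e₁ e₂ e₃)
    (hF : ∀ c : ℚ, c ≠ 0 → ∀ v, F (c • v) = F v) : AdaptedBasis p F e₂ e₃ ((p : ℚ) • e₁) where
  indep x y z hxyz := by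
    obtain ⟨h1, h2, h3⟩ := h.indep (z * p) x y (by rw [← hxyz]; module)
    exact ⟨h2, h3, (mul_eq_zero.mp h1).resolve_right prime_cast_ne_zero⟩
  span := by
    have := h.span.rotate.smul one_ne_zero one_ne_zero (prime_cast_ne_zero (p := p))
    simpa using this
  ne₁₂ := h.ne₂₃
  ne₁₃ := by rw [hF p prime_cast_ne_zero]; exact h.ne₁₂.symm
  ne₂₃ := by rw [hF p prime_cast_ne_zero]; exact h.ne₁₃.symm
  split₁₂ := h.split₂₃
  split₁₃ := h.split₁₂.swap hF
  split₂₃ := h.split₁₃.swap hF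

theorem ne_zero_of_indep (hi : ∀ x y z : ℚ, x • e₁ + y • e₂ + z • e₃ = 0 → x = 0 ∧ y = 0 ∧ z = 0)
    {x y z : ℚ} (h : x ≠ 0 ∨ y ≠ 0 ∨ z ≠ 0) : x • e₁ + y • e₂ + z • e₃ ≠ 0 := fun h0 => by
  obtain ⟨rfl, rfl, rfl⟩ := hi _ _ _ h0
  simp at h

theorem coord_eq_of_indep
    (hi : ∀ x y z : ℚ, x • e₁ + y • e₂ + z • e₃ = 0 → x = 0 ∧ y = 0 ∧ z = 0)
    {x y z x' y' z' : ℚ} (h : x • e₁ + y • e₂ + z • e₃ = x' • e₁ + y' • e₂ + z' • e₃) :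
    x = x' ∧ y = y' ∧ z = z' := by
  obtain ⟨h1, h2, h3⟩ := hi (x - x') (y - y') (z - z') (by rw [← sub_eq_zero.mpr h]; module)
  exact ⟨sub_eq_zero.mp h1, sub_eq_zero.mp h2, sub_eq_zero.mp h3⟩

/-- On a line through two points of different colours, there are no further colours. -/
def TwoValued (F : V → A) : Prop :=
  ∀ (u v : V) (a b : ℚ), u ≠ 0 → v ≠ 0 → a • u + b • v ≠ 0 → F u ≠ F v →
    F (a • u + b • v) = F u ∨ F (a • u + b • v) = F v

theorem AdaptedBasis.apply_eq_first (h : AdaptedBasis p F e₁ e₂ e₃) (h2 : TwoValued F)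
    {x y z : ℚ} (hx : x ≠ 0) (hy : padicNorm p y ≤ padicNorm p x)
    (hz : padicNorm p z ≤ padicNorm p x) : F (x • e₁ + y • e₂ + z • e₃) = F e₁ := by
  have hne := ne_zero_of_indep h.indep (x := x) (y := y) (z := z) (Or.inl hx)
  have k₁ := h.split₁₂.1 x y hx hy
  have k₂ := h.split₁₃.1 x z hx hz
  have h3 := h2 (x • e₁ + y • e₂) e₃ 1 z
    (by simpa using ne_zero_of_indep h.indep (x := x) (y := y) (z := 0) (Or.inl hx))
    (by simpa using ne_zero_of_indep h.indep (x := 0) (y := 0) (z := 1) (by simp))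
    (by simpa using hne) (by rw [k₁]; exact h.ne₁₃)
  have h4 := h2 (x • e₁ + z • e₃) e₂ 1 y
    (by simpa using ne_zero_of_indep h.indep (x := x) (y := 0) (z := z) (Or.inl hx))
    (by simpa using ne_zero_of_indep h.indep (x := 0) (y := 1) (z := 0) (by simp))
    (by simpa [add_right_comm] using hne) (by rw [k₂]; exact h.ne₁₂)
  rw [k₁, one_smul] at h3
  rw [k₂, one_smul, add_right_comm] at h4
  rcases h3 with h3 | h3
  · exact h3
  · rcases h4 with h4 | h4
    · exact h4
    · exact absurd (h4.symm.trans h3) h.ne₂₃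

theorem AdaptedBasis.apply_eq_second (h : AdaptedBasis p F e₁ e₂ e₃) (h2 : TwoValued F)
    {x y z : ℚ} (hx : padicNorm p x < padicNorm p y) (hz : padicNorm p z ≤ padicNorm p y) :
    F (x • e₁ + y • e₂ + z • e₃) = F e₂ := by
  have hy : y ≠ 0 := ne_zero_of_padicNorm_pos ((padicNorm.nonneg _).trans_lt hx)
  have hne := ne_zero_of_indep h.indep (x := x) (y := y) (z := z) (Or.inr (Or.inl hy))
  have k₁ := h.split₁₂.2 x y hx
  have k₂ := h.split₂₃.1 y z hy hz
  have h3 := h2 (x • e₁ + y • e₂) e₃ 1 z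
    (by simpa using ne_zero_of_indep h.indep (x := x) (y := y) (z := 0) (by simp [hy]))
    (by simpa using ne_zero_of_indep h.indep (x := 0) (y := 0) (z := 1) (by simp))
    (by simpa using hne) (by rw [k₁]; exact h.ne₂₃)
  have h4 := h2 e₁ (y • e₂ + z • e₃) x 1
    (by simpa using ne_zero_of_indep h.indep (x := 1) (y := 0) (z := 0) (by simp))
    (by simpa using ne_zero_of_indep h.indep (x := 0) (y := y) (z := z) (by simp [hy]))
    (by simpa [add_assoc] using hne) (by rw [k₂]; exact h.ne₁₂)
  rw [k₁, one_smul] at h3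
  rw [k₂, one_smul, ← add_assoc] at h4
  rcases h3 with h3 | h3
  · exact h3
  · rcases h4 with h4 | h4
    · exact absurd (h4.symm.trans h3) h.ne₁₃
    · exact h4

theorem AdaptedBasis.apply_eq_third (h : AdaptedBasis p F e₁ e₂ e₃) (h2 : TwoValued F)
    {x y z : ℚ} (hx : padicNorm p x < padicNorm p z) (hy : padicNorm p y < padicNorm p z) :
    F (x • e₁ + y • e₂ + z • e₃) = F e₃ := by
  have hz : z ≠ 0 := ne_zero_of_padicNorm_pos ((padicNorm.nonneg _).trans_lt hx)
  have hne := ne_zero_of_indep h.indep (x := x) (y := y) (z := z) (by simp [hz])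
  have k₁ := h.split₁₃.2 x z hx
  have k₂ := h.split₂₃.2 y z hy
  have h3 := h2 (x • e₁ + z • e₃) e₂ 1 y
    (by simpa using ne_zero_of_indep h.indep (x := x) (y := 0) (z := z) (by simp [hz]))
    (by simpa using ne_zero_of_indep h.indep (x := 0) (y := 1) (z := 0) (by simp))
    (by simpa [add_right_comm] using hne) (by rw [k₁]; exact h.ne₂₃.symm)
  have h4 := h2 e₁ (y • e₂ + z • e₃) x 1
    (by simpa using ne_zero_of_indep h.indep (x := 1) (y := 0) (z := 0) (by simp))
    (by simpa using ne_zero_of_indep h.indep (x := 0) (y := y) (z := z) (by simp [hz]))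
    (by simpa [add_assoc] using hne) (by rw [k₂]; exact h.ne₁₃)
  rw [k₁, one_smul, add_right_comm] at h3
  rw [k₂, one_smul, ← add_assoc] at h4
  rcases h3 with h3 | h3
  · exact h3
  · rcases h4 with h4 | h4
    · exact absurd (h4.symm.trans h3) h.ne₁₂
    · exact h4

end Adapted

section Lattices

variable {V : Type v} [AddCommGroup V] [Module ℚ V] {A : Type w} {p : ℕ}
  {e₁ e₂ e₃ : V} {F : V → A}

theorem mem_zpSpanThree_iff
    (hi : ∀ x y z : ℚ, x • e₁ + y • e₂ + z • e₃ = 0 → x = 0 ∧ y = 0 ∧ z = 0) {x y z : ℚ} :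
    x • e₁ + y • e₂ + z • e₃ ∈ zpSpanThree p e₁ e₂ e₃ ↔
      padicNorm p x ≤ 1 ∧ padicNorm p y ≤ 1 ∧ padicNorm p z ≤ 1 := by
  constructor
  · rintro ⟨x', y', z', hx, hy, hz, h⟩
    obtain ⟨rfl, rfl, rfl⟩ := coord_eq_of_indep hi h
    exact ⟨hx, hy, hz⟩
  · rintro ⟨hx, hy, hz⟩
    exact ⟨x, y, z, hx, hy, hz, rfl⟩

/-- The colour of a primitive vector in terms of the residues of its coordinates. -/
theorem AdaptedBasis.apply_of_primitive (h : AdaptedBasis p F e₁ e₂ e₃) (h2 : TwoValued F)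
    {x y z : ℚ} (hy : padicNorm p y ≤ 1) (hz : padicNorm p z ≤ 1) :
    (¬ padicNorm p x < 1 → F (x • e₁ + y • e₂ + z • e₃) = F e₁) ∧
    (padicNorm p x < 1 → ¬ padicNorm p y < 1 → F (x • e₁ + y • e₂ + z • e₃) = F e₂) ∧
    (padicNorm p x < 1 → padicNorm p y < 1 → ¬ padicNorm p z < 1 →
      F (x • e₁ + y • e₂ + z • e₃) = F e₃) := by
  refine ⟨fun hx1 => ?_, fun hx1 hy1 => ?_, fun hx1 hy1 hz1 => ?_⟩
  · rw [not_lt] at hx1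
    exact h.apply_eq_first h2 (ne_zero_of_padicNorm_pos (p := p) (one_pos.trans_le hx1))
      (hy.trans hx1) (hz.trans hx1)
  · rw [not_lt] at hy1
    exact h.apply_eq_second h2 (hx1.trans_le hy1) (hz.trans hy1)
  · rw [not_lt] at hz1
    exact h.apply_eq_third h2 (hx1.trans_le hz1) (hy1.trans_le hz1)

theorem not_latEq_of_smul_mem {B B' : Set V} {u v : V} (hu : u ∈ B) (hv : v ∈ B')
    (hu' : ∀ a : ℚ, a • u ∈ B' → padicNorm p a < 1)
    (hv' : ∀ a : ℚ, a ≠ 0 → ∀ b ∈ B, v = a • b → 1 ≤ padicNorm p a) : ¬ LatEq B B' := by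
  rintro ⟨a, ha, rfl⟩
  obtain ⟨b, hb, hbv⟩ := hv
  exact absurd (hu' a ⟨u, hu, rfl⟩) (not_lt.mpr (hv' a ha b hb hbv.symm))

variable [Fact p.Prime]

theorem zpStable_zpSpanThree : ZpStable p (zpSpanThree p e₁ e₂ e₃) := by
  refine ⟨⟨0, 0, 0, by simp, by simp, by simp, by simp⟩, ?_, ?_⟩
  · rintro _ ⟨x, y, z, hx, hy, hz, rfl⟩ _ ⟨x', y', z', hx', hy', hz', rfl⟩
    exact ⟨x + x', y + y', z + z', padicNorm_add_le hx hx', padicNorm_add_le hy hy',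
      padicNorm_add_le hz hz', by module⟩
  · rintro c hc _ ⟨x, y, z, hx, hy, hz, rfl⟩
    exact ⟨c * x, c * y, c * z, padicNorm_mul_le_one hc hx, padicNorm_mul_le_one hc hy,
      padicNorm_mul_le_one hc hz, by module⟩

theorem padicNorm_prime_inv_mul_le_one_iff {c : ℚ} :
    padicNorm p ((p : ℚ)⁻¹ * c) ≤ 1 ↔ padicNorm p c < 1 := by
  refine ⟨fun h => ?_, padicNorm_prime_inv_mul_le_one⟩
  have hp0 := padicNorm_pos (p := p) (prime_cast_ne_zero (p := p))
  rw [padicNorm.mul, padicNorm_inv, inv_mul_le_one₀ hp0] at h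
  exact h.trans_lt padicNorm.padicNorm_p_lt_one_of_prime

theorem mem_pSMul_zpSpanThree_iff
    (hi : ∀ x y z : ℚ, x • e₁ + y • e₂ + z • e₃ = 0 → x = 0 ∧ y = 0 ∧ z = 0) {x y z : ℚ} :
    x • e₁ + y • e₂ + z • e₃ ∈ pSMul p (zpSpanThree p e₁ e₂ e₃) ↔
      padicNorm p x < 1 ∧ padicNorm p y < 1 ∧ padicNorm p z < 1 := by
  rw [mem_pSMul_iff, smul_add, smul_add, smul_smul, smul_smul, smul_smul, mem_zpSpanThree_iff hi]
  simp only [padicNorm_prime_inv_mul_le_one_iff]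

theorem isZpLatIn_zpSpanThree (hspan : SpansThree e₁ e₂ e₃) (h₁₂ : e₁ ≠ e₂) (h₁₃ : e₁ ≠ e₃)
    (h₂₃ : e₂ ≠ e₃) : IsZpLatIn p ⊤ (zpSpanThree p e₁ e₂ e₃) := by
  classical
  refine ⟨⟨{e₁, e₂, e₃}, Set.ext fun v => ?_⟩, ?_⟩
  · have hsum : ∀ c : V → ℚ, ∑ t ∈ ({e₁, e₂, e₃} : Finset V), c t • t =
        c e₁ • e₁ + c e₂ • e₂ + c e₃ • e₃ := fun c => by
      rw [Finset.sum_insert (by simp [h₁₂, h₁₃]), Finset.sum_insert (by simpa using h₂₃),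
        Finset.sum_singleton, add_assoc]
    constructor
    · rintro ⟨x, y, z, hx, hy, hz, rfl⟩
      refine ⟨fun t => if t = e₁ then x else if t = e₂ then y else z, fun t => ?_, ?_⟩
      · rw [not_dvd_den_iff_padicNorm_le_one]
        dsimp only
        split_ifs <;> assumption
      · rw [hsum]
        simp [h₁₂.symm, h₁₃.symm, h₂₃.symm]
    · rintro ⟨c, hc, rfl⟩
      simp only [not_dvd_den_iff_padicNorm_le_one] at hc
      exact ⟨_, _, _, hc e₁, hc e₂, hc e₃, hsum c⟩
  · refine eq_top_iff.mpr fun v _ => ?_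
    obtain ⟨x, y, z, rfl⟩ := hspan v
    refine add_mem (add_mem ?_ ?_) ?_ <;>
      refine Submodule.smul_mem _ _ (Submodule.subset_span ?_)
    · exact ⟨1, 0, 0, by simp, by simp, by simp, by simp⟩
    · exact ⟨0, 1, 0, by simp, by simp, by simp, by simp⟩
    · exact ⟨0, 0, 1, by simp, by simp, by simp, by simp⟩

variable {f : Projectivization ℚ V → A}

theorem AdaptedBasis.isZpLatIn (h : AdaptedBasis p F e₁ e₂ e₃) :
    IsZpLatIn p ⊤ (zpSpanThree p e₁ e₂ e₃) :=
  isZpLatIn_zpSpanThree h.span (fun e => h.ne₁₂ (by rw [e])) (fun e => h.ne₁₃ (by rw [e]))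
    fun e => h.ne₂₃ (by rw [e])

theorem padicNorm_lt_one_congr {a b : ℚ} (h : padicNorm p (a - b) < 1) :
    padicNorm p a < 1 ↔ padicNorm p b < 1 := by
  constructor <;> intro h1
  · have := padicNorm_add_lt h1 (by rwa [padicNorm.neg] : padicNorm p (-(a - b)) < 1)
    simpa using this
  · have := padicNorm_add_lt h h1
    simpa using this

theorem AdaptedBasis.inducedOn (h : AdaptedBasis p F e₁ e₂ e₃) (h2 : TwoValued F)
    (hF : ∀ c : ℚ, c ≠ 0 → ∀ v, F (c • v) = F v)
    (hf : ∀ v hv, f (Projectivization.mk ℚ v hv) = F v) :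
    InducedOn f ⊤ p (zpSpanThree p e₁ e₂ e₃) := by
  rintro u v hu hv - - ⟨_, _, ⟨a, ha, rfl⟩, ⟨b, hb, rfl⟩, hu1, hu2, hv1, hv2, huv⟩
  rw [hf, hf, ← hF a ha u, ← hF b hb v]
  obtain ⟨x, y, z, hxyz⟩ := h.span (a • u)
  obtain ⟨x', y', z', hxyz'⟩ := h.span (b • v)
  rw [hxyz] at hu1 hu2 huv ⊢
  rw [hxyz'] at hv1 hv2 huv ⊢
  rw [mem_zpSpanThree_iff h.indep] at hu1 hv1
  rw [mem_pSMul_zpSpanThree_iff h.indep] at hu2 hv2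
  rw [show x • e₁ + y • e₂ + z • e₃ - (x' • e₁ + y' • e₂ + z' • e₃) =
    (x - x') • e₁ + (y - y') • e₂ + (z - z') • e₃ by module,
    mem_pSMul_zpSpanThree_iff h.indep] at huv
  obtain ⟨k₁, k₂, k₃⟩ := h.apply_of_primitive h2 hu1.2.1 hu1.2.2
  obtain ⟨l₁, l₂, l₃⟩ := h.apply_of_primitive h2 hv1.2.1 hv1.2.2
  have hx := padicNorm_lt_one_congr huv.1
  have hy := padicNorm_lt_one_congr huv.2.1
  by_cases hx1 : padicNorm p x < 1
  · have hx1' := hx.mp hx1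
    by_cases hy1 : padicNorm p y < 1
    · have hy1' := hy.mp hy1
      rw [k₃ hx1 hy1 fun hz => hu2 ⟨hx1, hy1, hz⟩, l₃ hx1' hy1' fun hz => hv2 ⟨hx1', hy1', hz⟩]
    · rw [k₂ hx1 hy1, l₂ hx1' (mt hy.mpr hy1)]
  · rw [k₁ hx1, l₁ (mt hx.mpr hx1)]

theorem AdaptedBasis.resFlagPlane (h : AdaptedBasis p F e₁ e₂ e₃) (h2 : TwoValued F)
    (hF : ∀ c : ℚ, c ≠ 0 → ∀ v, F (c • v) = F v)
    (hf : ∀ v hv, f (Projectivization.mk ℚ v hv) = F v) :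
    ResFlagPlane f p (zpSpanThree p e₁ e₂ e₃) := by
  have hB : ZpStable p (zpSpanThree p e₁ e₂ e₃) := zpStable_zpSpanThree
  have mem := fun x y z => mem_zpSpanThree_iff (p := p) h.indep (x := x) (y := y) (z := z)
  have memp := fun x y z => mem_pSMul_zpSpanThree_iff (p := p) h.indep (x := x) (y := y) (z := z)
  have h₂ : e₂ ∈ zpSpanThree p e₁ e₂ e₃ := by simpa using (mem 0 1 0).mpr (by simp)
  have h₃ : e₃ ∈ zpSpanThree p e₁ e₂ e₃ := by simpa using (mem 0 0 1).mpr (by simp)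
  have h₂' : e₂ ∉ pSMul p (zpSpanThree p e₁ e₂ e₃) := fun h' => by
    have := (memp 0 1 0).mp (by simpa using h')
    simp at this
  have h₃' : e₃ ∉ pSMul p (zpSpanThree p e₁ e₂ e₃) := fun h' => by
    have := (memp 0 0 1).mp (by simpa using h')
    simp at this
  have hline : ∀ x y z : ℚ, x • e₁ + y • e₂ + z • e₃ ∈
      resLineV p (zpSpanThree p e₁ e₂ e₃) e₃ e₂ ↔
      padicNorm p x < 1 ∧ padicNorm p y ≤ 1 ∧ padicNorm p z ≤ 1 := by
    intro x y z
    simp only [resLineV, Set.mem_ofPred_eq, not_dvd_den_iff_padicNorm_le_one]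
    constructor
    · rintro ⟨a, b, ha, hb, v, hv, hxyz⟩
      obtain ⟨x', y', z', rfl⟩ := h.span v
      rw [memp] at hv
      obtain ⟨rfl, rfl, rfl⟩ := coord_eq_of_indep h.indep
        (hxyz.trans (by module : _ = x' • e₁ + (b + y') • e₂ + (a + z') • e₃))
      exact ⟨hv.1, padicNorm_add_le hb hv.2.1.le, padicNorm_add_le ha hv.2.2.le⟩
    · rintro ⟨hx, hy, hz⟩
      refine ⟨z, y, hz, hy, x • e₁, ?_, by module⟩
      simpa using (memp x 0 0).mpr (by simpa using hx)
  refine ⟨e₃, e₂, ⟨h₃, h₃'⟩, ⟨h₂, h₂'⟩, fun hr => ?_, ?_, ?_⟩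
  · obtain ⟨c, hc, hmem⟩ := (hB.zpRelV_iff h₃ h₃' h₂ h₂').mp hr
    rw [show e₃ - c • e₂ = (0 : ℚ) • e₁ + (-c) • e₂ + (1 : ℚ) • e₃ by module, memp] at hmem
    simp at hmem
  · have key : ∀ (v : V) (a : ℚ), a ≠ 0 → a • v ∈ zpSpanThree p e₁ e₂ e₃ →
        a • v ∉ resLineV p (zpSpanThree p e₁ e₂ e₃) e₃ e₂ → F v = F e₁ := by
      intro v a ha hv hv'
      rw [← hF a ha]
      obtain ⟨x, y, z, hxyz⟩ := h.span (a • v)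
      rw [hxyz, mem] at hv
      rw [hxyz, hline] at hv'
      rw [hxyz]
      exact (h.apply_of_primitive h2 hv.2.1 hv.2.2).1 (by tauto)
    rintro u v hu hv ⟨a, ha, ha1, ha2⟩ ⟨b, hb, hb1, hb2⟩
    rw [hf, hf, key u a ha ha1.1 ha2, key v b hb hb1.1 hb2]
  · have key : ∀ (v : V) (a : ℚ), a ≠ 0 → a • v ∈ resLineV p (zpSpanThree p e₁ e₂ e₃) e₃ e₂ →
        a • v ∉ pSMul p (zpSpanThree p e₁ e₂ e₃) →
        ¬ ZpRelV p (zpSpanThree p e₁ e₂ e₃) v e₃ → F v = F e₂ := by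
      intro v a ha hv hv' hr
      rw [← hF a ha]
      have hvB := hB.resLineV_subset h₃ h₂ hv
      rw [← zpRelV_smul_left_iff ha, hB.zpRelV_iff hvB hv' h₃ h₃'] at hr
      obtain ⟨x, y, z, hxyz⟩ := h.span (a • v)
      rw [hxyz, hline] at hv
      rw [hxyz]
      refine (h.apply_of_primitive h2 hv.2.1 hv.2.2).2.1 hv.1 fun hy => hr ?_
      refine ⟨z, hv.2.2, ?_⟩
      rw [hxyz, show x • e₁ + y • e₂ + z • e₃ - z • e₃ = x • e₁ + y • e₂ + (0 : ℚ) • e₃ by module,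
        memp]
      exact ⟨hv.1, hy, by simp⟩
    rintro u v hu hv ⟨a, ha, ha1, ha2⟩ hur ⟨b, hb, hb1, hb2⟩ hvr
    rw [hf, hf, key u a ha ha1 ha2 hur, key v b hb hb1 hb2 hvr]

theorem latEq_zpSpanThree {a s₁ s₂ s₃ t₁ t₂ t₃ : ℚ} (ha : a ≠ 0) (hs₁ : s₁ ≠ 0) (hs₂ : s₂ ≠ 0)
    (hs₃ : s₃ ≠ 0) (ht₁ : t₁ ≠ 0) (ht₂ : t₂ ≠ 0) (ht₃ : t₃ ≠ 0)
    (h₁ : padicNorm p (a * s₁) = padicNorm p t₁) (h₂ : padicNorm p (a * s₂) = padicNorm p t₂)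
    (h₃ : padicNorm p (a * s₃) = padicNorm p t₃) :
    LatEq (zpSpanThree p (s₁ • e₁) (s₂ • e₂) (s₃ • e₃))
      (zpSpanThree p (t₁ • e₁) (t₂ • e₂) (t₃ • e₃)) := by
  have hn : ∀ x c d : ℚ, d ≠ 0 → padicNorm p c = padicNorm p d → padicNorm p x ≤ 1 →
      padicNorm p (x * c / d) ≤ 1 := fun x c d hd hcd hx => by
    rwa [padicNorm.div, padicNorm.mul, hcd, mul_div_cancel_right₀ _ (padicNorm.nonzero hd)]
  have hc : ∀ x s t : ℚ, a ≠ 0 → s ≠ 0 → a * (x * t / (a * s) * s) = x * t := by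
    intro x s t ha hs
    field_simp
  have hd : ∀ x t : ℚ, t ≠ 0 → ∀ s, x * s / t * t = x * s := by
    intro x t ht s
    field_simp
  refine ⟨a, ha, Set.ext fun v => ⟨?_, ?_⟩⟩
  · rintro ⟨x, y, z, hx, hy, hz, rfl⟩
    refine ⟨_, ⟨x * t₁ / (a * s₁), y * t₂ / (a * s₂), z * t₃ / (a * s₃),
      hn _ _ _ (by positivity) h₁.symm hx, hn _ _ _ (by positivity) h₂.symm hy,
      hn _ _ _ (by positivity) h₃.symm hz, rfl⟩, ?_⟩
    simp only [smul_add, smul_smul]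
    rw [hc x _ _ ha hs₁, hc y _ _ ha hs₂, hc z _ _ ha hs₃]
  · rintro ⟨_, ⟨x, y, z, hx, hy, hz, rfl⟩, rfl⟩
    refine ⟨x * (a * s₁) / t₁, y * (a * s₂) / t₂, z * (a * s₃) / t₃, hn _ _ _ ht₁ h₁ hx,
      hn _ _ _ ht₂ h₂ hy, hn _ _ _ ht₃ h₃ hz, ?_⟩
    simp only [smul_add, smul_smul]
    rw [hd x _ ht₁, hd y _ ht₂, hd z _ ht₃, mul_left_comm x, mul_left_comm y, mul_left_comm z]

theorem one_le_padicNorm_of_mul_eq_one {a b : ℚ} (hb : padicNorm p b ≤ 1) (h : a * b = 1) :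
    1 ≤ padicNorm p a := by
  have h1 : padicNorm p a * padicNorm p b = 1 := by rw [← padicNorm.mul, h, padicNorm.one]
  have := padicNorm.nonneg (p := p) a
  nlinarith

theorem AdaptedBasis.not_latEq_rotate (h : AdaptedBasis p F e₁ e₂ e₃) :
    ¬ LatEq (zpSpanThree p e₁ e₂ e₃) (zpSpanThree p e₂ e₃ ((p : ℚ) • e₁)) := by
  refine not_latEq_of_smul_mem (p := p) (u := e₁) (v := e₂)
    ⟨1, 0, 0, by simp, by simp, by simp, by simp⟩ ⟨1, 0, 0, by simp, by simp, by simp, by simp⟩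
    ?_ ?_
  · rintro a ⟨x, y, z, -, -, hz, hxyz⟩
    obtain ⟨rfl, -, -⟩ := coord_eq_of_indep h.indep (x := a) (y := 0) (z := 0) (x' := z * p)
      (y' := x) (z' := y) (by rw [zero_smul, zero_smul, add_zero, add_zero, hxyz]; module)
    rw [padicNorm.mul]
    exact mul_lt_one_of_nonneg_of_lt_one_right hz (padicNorm.nonneg _)
      padicNorm.padicNorm_p_lt_one_of_prime
  · rintro a - _ ⟨x, y, z, -, hy, -, rfl⟩ hxyz
    obtain ⟨-, h1, -⟩ := coord_eq_of_indep h.indep (x := 0) (y := 1) (z := 0) (x' := a * x)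
      (y' := a * y) (z' := a * z)
      (by rw [zero_smul, zero_smul, add_zero, zero_add, one_smul]; exact hxyz.trans (by module))
    exact one_le_padicNorm_of_mul_eq_one hy h1.symm

theorem AdaptedBasis.not_latEq_rotate_rotate (h : AdaptedBasis p F e₁ e₂ e₃) :
    ¬ LatEq (zpSpanThree p e₁ e₂ e₃) (zpSpanThree p e₃ ((p : ℚ) • e₁) ((p : ℚ) • e₂)) := by
  refine not_latEq_of_smul_mem (p := p) (u := e₁) (v := e₃)
    ⟨1, 0, 0, by simp, by simp, by simp, by simp⟩ ⟨1, 0, 0, by simp, by simp, by simp, by simp⟩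
    ?_ ?_
  · rintro a ⟨x, y, z, -, hy, -, hxyz⟩
    obtain ⟨rfl, -, -⟩ := coord_eq_of_indep h.indep (x := a) (y := 0) (z := 0) (x' := y * p)
      (y' := z * p) (z' := x) (by rw [zero_smul, zero_smul, add_zero, add_zero, hxyz]; module)
    rw [padicNorm.mul]
    exact mul_lt_one_of_nonneg_of_lt_one_right hy (padicNorm.nonneg _)
      padicNorm.padicNorm_p_lt_one_of_prime
  · rintro a - _ ⟨x, y, z, -, -, hz, rfl⟩ hxyz
    obtain ⟨-, -, h1⟩ := coord_eq_of_indep h.indep (x := 0) (y := 0) (z := 1) (x' := a * x)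
      (y' := a * y) (z' := a * z)
      (by rw [zero_smul, zero_smul, add_zero, zero_add, one_smul]; exact hxyz.trans (by module))
    exact one_le_padicNorm_of_mul_eq_one hz h1.symm

/-- Every lattice with an adapted residue flag is one of the three lattices of the chain of an
adapted basis. -/
theorem AdaptedBasis.latEq_of_residueFlag (h : AdaptedBasis p F e₁ e₂ e₃) {B : Set V} {q w : V}
    (hB : ResidueFlag p F B q w)
    (hscale : ∀ v : V, v ≠ 0 → ∃ a : ℚ, a ≠ 0 ∧ a • v ∈ B ∧ a • v ∉ pSMul p B) :
    LatEq B (zpSpanThree p e₁ e₂ e₃) ∨ LatEq B (zpSpanThree p e₂ e₃ ((p : ℚ) • e₁)) ∨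
      LatEq B (zpSpanThree p e₃ ((p : ℚ) • e₁) ((p : ℚ) • e₂)) := by
  have hF := hB.smul
  have hp0 : (p : ℚ) ≠ 0 := prime_cast_ne_zero
  have hp1 : padicNorm p (p : ℚ) < 1 := padicNorm.padicNorm_p_lt_one_of_prime
  have hpp : 0 < padicNorm p (p : ℚ) := padicNorm_pos hp0
  obtain ⟨s₁, s₂, s₃, h₁, h₂, h₃, hcases⟩ := hB.exists_flagBasis hscale
    (by simpa using ne_zero_of_indep h.indep (x := 1) (y := 0) (z := 0) (by simp))
    (by simpa using ne_zero_of_indep h.indep (x := 0) (y := 1) (z := 0) (by simp))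
    (by simpa using ne_zero_of_indep h.indep (x := 0) (y := 0) (z := 1) (by simp))
    h.span h.ne₁₂ h.ne₁₃ h.ne₂₃
  have n₁ := padicNorm_pos (p := p) h₁
  have n₂ := padicNorm_pos (p := p) h₂
  have n₃ := padicNorm_pos (p := p) h₃
  have a₁₂ := fun k => h.split₁₂.padicNorm_eq h₁ h₂ k hF h.ne₁₂
  have a₁₃ := fun k => h.split₁₃.padicNorm_eq h₁ h₃ k hF h.ne₁₃
  have a₂₃ := fun k => h.split₂₃.padicNorm_eq h₂ h₃ k hF h.ne₂₃
  have b₁₂ := fun k => h.split₁₂.padicNorm_eq_of_swap h₁ h₂ k hF h.ne₁₂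
  have b₁₃ := fun k => h.split₁₃.padicNorm_eq_of_swap h₁ h₃ k hF h.ne₁₃
  have b₂₃ := fun k => h.split₂₃.padicNorm_eq_of_swap h₂ h₃ k hF h.ne₂₃
  have hinv : ∀ s t : ℚ, s ≠ 0 → padicNorm p t = padicNorm p s →
      padicNorm p (s⁻¹ * t) = padicNorm p 1 := fun s t hs hst => by
    rw [padicNorm.mul, padicNorm_inv, hst, inv_mul_cancel₀ (padicNorm.nonzero hs), padicNorm.one]
  have hinv' : ∀ s t : ℚ, s ≠ 0 → padicNorm p t = padicNorm p p * padicNorm p s →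
      padicNorm p (s⁻¹ * t) = padicNorm p p := fun s t hs hst => by
    rw [padicNorm.mul, padicNorm_inv, hst, mul_left_comm,
      inv_mul_cancel₀ (padicNorm.nonzero hs), mul_one]
  rcases hcases with ⟨rfl, k₁, k₂, k₃⟩ | ⟨rfl, k₁, k₂, k₃⟩ | ⟨rfl, k₁, k₂, k₃⟩ | ⟨rfl, k₁, k₂, k₃⟩ |
    ⟨rfl, k₁, k₂, k₃⟩ | ⟨rfl, k₁, k₂, k₃⟩
  · have := latEq_zpSpanThree (e₁ := e₁) (e₂ := e₂) (e₃ := e₃) (inv_ne_zero h₁) h₁ h₂ h₃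
      one_ne_zero one_ne_zero one_ne_zero (hinv s₁ s₁ h₁ rfl) (hinv s₁ s₂ h₁ (a₁₂ k₁).symm)
      (hinv s₁ s₃ h₁ (a₁₃ k₂).symm)
    simp only [one_smul] at this
    exact Or.inl this
  · have := a₁₃ k₁
    have := a₁₂ k₂
    have := b₂₃ k₃
    nlinarith
  · have := b₁₂ k₁
    have := a₂₃ k₂
    have := a₁₃ k₃
    nlinarith
  · have := latEq_zpSpanThree (e₁ := e₂) (e₂ := e₃) (e₃ := e₁) (inv_ne_zero h₂) h₂ h₃ h₁
      one_ne_zero one_ne_zero hp0 (hinv s₂ s₂ h₂ rfl) (hinv s₂ s₃ h₂ (a₂₃ k₁).symm)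
      (hinv' s₂ s₁ h₂ (b₁₂ k₂))
    simp only [one_smul] at this
    exact Or.inr (Or.inl this)
  · have := latEq_zpSpanThree (e₁ := e₃) (e₂ := e₁) (e₃ := e₂) (inv_ne_zero h₃) h₃ h₁ h₂
      one_ne_zero hp0 hp0 (hinv s₃ s₃ h₃ rfl) (hinv' s₃ s₁ h₃ (b₁₃ k₁)) (hinv' s₃ s₂ h₃ (b₂₃ k₂))
    simp only [one_smul] at this
    exact Or.inr (Or.inr this)
  · have := b₂₃ k₁
    have := b₁₃ k₂
    have := b₁₂ k₃
    nlinarith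

end Lattices

section Existence

variable {V : Type v} [AddCommGroup V] [Module ℚ V] {A : Type w} {F : V → A} {e₁ e₂ e₃ : V}

theorem indep_of_twoValued (h2 : TwoValued F) (hF : ∀ c : ℚ, c ≠ 0 → ∀ v, F (c • v) = F v)
    (h₁ : e₁ ≠ 0) (h₂ : e₂ ≠ 0) (h₃ : e₃ ≠ 0) (h₁₂ : F e₁ ≠ F e₂) (h₁₃ : F e₁ ≠ F e₃)
    (h₂₃ : F e₂ ≠ F e₃) (x y z : ℚ) (h : x • e₁ + y • e₂ + z • e₃ = 0) :
    x = 0 ∧ y = 0 ∧ z = 0 := by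
  have hz : z = 0 := by
    by_contra hz
    have he : e₃ = (-(z⁻¹ * x)) • e₁ + (-(z⁻¹ * y)) • e₂ := by
      rw [← inv_smul_smul₀ hz e₃, eq_neg_of_add_eq_zero_right h]
      module
    rcases h2 e₁ e₂ _ _ h₁ h₂ (he ▸ h₃) h₁₂ with k | k
    · exact h₁₃ (k.symm.trans (congrArg F he.symm))
    · exact h₂₃ (k.symm.trans (congrArg F he.symm))
  subst hz
  rw [zero_smul, add_zero] at h
  have hy : y = 0 := by
    by_contra hy
    have he : e₂ = (-(y⁻¹ * x)) • e₁ := by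
      rw [← inv_smul_smul₀ hy e₂, eq_neg_of_add_eq_zero_right h]
      module
    refine h₁₂ ?_
    rw [he, hF _ fun h0 => h₂ (by rw [he, h0, zero_smul])]
  subst hy
  rw [zero_smul, add_zero] at h
  exact ⟨(smul_eq_zero.mp h).resolve_right h₁, rfl, rfl⟩

theorem spansThree_of_indep (hV : Module.finrank ℚ V = 3)
    (hi : ∀ x y z : ℚ, x • e₁ + y • e₂ + z • e₃ = 0 → x = 0 ∧ y = 0 ∧ z = 0) :
    SpansThree e₁ e₂ e₃ := fun v => by
  have hli : LinearIndependent ℚ ![e₁, e₂, e₃] := by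
    refine Fintype.linearIndependent_iff.mpr fun c hc => ?_
    rw [Fin.sum_univ_three] at hc
    obtain ⟨h₁, h₂, h₃⟩ := hi _ _ _ hc
    intro i
    fin_cases i <;> assumption
  have htop := hli.span_eq_top_of_card_eq_finrank (by simp [hV])
  have hv : v ∈ Submodule.span ℚ (Set.range ![e₁, e₂, e₃]) := htop ▸ Submodule.mem_top
  obtain ⟨c, hc⟩ := (Submodule.mem_span_range_iff_exists_fun ℚ).mp hv
  exact ⟨c 0, c 1, c 2, by rw [← hc, Fin.sum_univ_three]; rfl⟩

/-- The three sides of a triangle of three colours cannot be coloured cyclically at their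
midpoints. -/
theorem TwoValued.not_cyclic (h2 : TwoValued F)
    (hi : ∀ x y z : ℚ, x • e₁ + y • e₂ + z • e₃ = 0 → x = 0 ∧ y = 0 ∧ z = 0)
    (h₁₂ : F e₁ ≠ F e₂) (h₁₃ : F e₁ ≠ F e₃) (h₂₃ : F e₂ ≠ F e₃) (k₁₂ : F (e₁ + e₂) = F e₁)
    (k₂₃ : F (e₂ + e₃) = F e₂) (k₃₁ : F (e₃ + e₁) = F e₃) : False := by
  have ne := fun {x y z} => ne_zero_of_indep hi (x := x) (y := y) (z := z)
  have hne : e₁ + e₂ + e₃ ≠ 0 := by simpa using ne (x := 1) (y := 1) (z := 1) (by simp)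
  have n₁ : e₁ ≠ 0 := by simpa using ne (x := 1) (y := 0) (z := 0) (by simp)
  have n₂ : e₂ ≠ 0 := by simpa using ne (x := 0) (y := 1) (z := 0) (by simp)
  have n₃ : e₃ ≠ 0 := by simpa using ne (x := 0) (y := 0) (z := 1) (by simp)
  have n₁₂ : e₁ + e₂ ≠ 0 := by simpa using ne (x := 1) (y := 1) (z := 0) (by simp)
  have n₂₃ : e₂ + e₃ ≠ 0 := by simpa using ne (x := 0) (y := 1) (z := 1) (by simp)
  have n₃₁ : e₃ + e₁ ≠ 0 := by simpa [add_comm] using ne (x := 1) (y := 0) (z := 1) (by simp)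
  have r₁ := h2 (e₁ + e₂) e₃ 1 1 n₁₂ n₃ (by simpa using hne) (by rwa [k₁₂])
  have r₂ := h2 (e₂ + e₃) e₁ 1 1 n₂₃ n₁ (by simpa [add_comm, add_left_comm] using hne)
    (by rw [k₂₃]; exact h₁₂.symm)
  have r₃ := h2 (e₃ + e₁) e₂ 1 1 n₃₁ n₂ (by simpa [add_comm, add_left_comm] using hne)
    (by rw [k₃₁]; exact h₂₃.symm)
  rw [k₁₂, show (1 : ℚ) • (e₁ + e₂) + (1 : ℚ) • e₃ = e₁ + e₂ + e₃ by module] at r₁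
  rw [k₂₃, show (1 : ℚ) • (e₂ + e₃) + (1 : ℚ) • e₁ = e₁ + e₂ + e₃ by module] at r₂
  rw [k₃₁, show (1 : ℚ) • (e₃ + e₁) + (1 : ℚ) • e₂ = e₁ + e₂ + e₃ by module] at r₃
  rcases r₁ with r₁ | r₁ <;> rw [r₁] at r₂ r₃
  · exact r₃.elim h₁₃ h₁₂
  · exact r₂.elim h₂₃.symm h₁₃.symm

variable {p : ℕ}

theorem PairSplit.apply_add {u v : V} (h : PairSplit p F u v) : F (u + v) = F u := by
  simpa using h.1 1 1 one_ne_zero le_rfl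

variable [Fact p.Prime]

/-- A map induced via a lattice from a flag map on the residue line splits every pair of points of
different colours. -/
theorem exists_pairSplit {W : Submodule ℚ V} {B : Set V} {q u v : V}
    (hF : ∀ c : ℚ, c ≠ 0 → ∀ v, F (c • v) = F v) (hB : IsZpLatIn p W B)
    (hrel : ∀ x ∈ W, ∀ y ∈ W, x ≠ 0 → y ≠ 0 → ZpRelV p B x y → F x = F y)
    (hq : q ∈ B) (hq' : q ∉ pSMul p B)
    (hoff : ∀ x ∈ W, ∀ y ∈ W, x ≠ 0 → y ≠ 0 → ¬ ZpRelV p B x q → ¬ ZpRelV p B y q → F x = F y)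
    (hu : u ∈ W) (hv : v ∈ W) (hu0 : u ≠ 0) (hv0 : v ≠ 0) (huv : F u ≠ F v) :
    ∃ c : ℚ, c ≠ 0 ∧ PairSplit p F u (c • v) := by
  have hS := hB.zpStable
  have h0 : ∀ x : V, x ∉ pSMul p B → x ≠ 0 := fun x hx h => hx (h ▸ hS.pSMul.1)
  have hind : ∀ x y, x ∈ B → x ∉ pSMul p B → y ∈ pSMul p B → F (x + y) = F x := by
    intro x y hx hx' hy
    have h1 : x + y ∈ B := hS.2.1 _ hx _ (hS.pSMul_subset hy)
    have h2 : x + y ∉ pSMul p B := fun h => hx' (by simpa using hS.pSMul.sub_mem h hy)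
    exact hrel _ (hB.subset h1) _ (hB.subset hx) (h0 _ h2) (h0 _ hx')
      ⟨x + y, x, ⟨1, one_ne_zero, by simp⟩, ⟨1, one_ne_zero, by simp⟩, h1, h2, hx, hx',
        by simpa using hy⟩
  obtain ⟨a, ha, hua, hua'⟩ := hB.exists_smul_mem hu hu0
  obtain ⟨b, hb, hvb, hvb'⟩ := hB.exists_smul_mem hv hv0
  have hq0 := h0 q hq'
  have hqW := hB.subset hq
  by_cases ru : ZpRelV p B u q
  · have rv : ¬ ZpRelV p B v q := fun rv =>
      huv ((hrel u hu q hqW hu0 hq0 ru).trans (hrel v hv q hqW hv0 hq0 rv).symm)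
    have hs := PairSplit.of_zpRelV hF hS hind hvb hvb' hua hua' hq hq'
      (by rwa [zpRelV_smul_left_iff hb]) (by rwa [zpRelV_smul_left_iff ha])
      fun y _ h1 h2 h3 => hoff _ (hB.subset h1) _ (hB.subset hvb) (h0 _ h2) (h0 _ hvb') h3
        (by rwa [zpRelV_smul_left_iff hb])
    have hs' := (hs.swap hF).smul hF (inv_ne_zero ha)
    rw [inv_smul_smul₀ ha, smul_smul, smul_smul] at hs'
    exact ⟨_, mul_ne_zero (mul_ne_zero (inv_ne_zero ha) prime_cast_ne_zero) hb, hs'⟩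
  · have rv : ZpRelV p B v q := by_contra fun rv => huv (hoff u hu v hv hu0 hv0 ru rv)
    have hs := PairSplit.of_zpRelV hF hS hind hua hua' hvb hvb' hq hq'
      (by rwa [zpRelV_smul_left_iff ha]) (by rwa [zpRelV_smul_left_iff hb])
      fun y _ h1 h2 h3 => hoff _ (hB.subset h1) _ (hB.subset hua) (h0 _ h2) (h0 _ hua') h3
        (by rwa [zpRelV_smul_left_iff ha])
    have hs' := hs.smul hF (inv_ne_zero ha)
    rw [inv_smul_smul₀ ha, smul_smul] at hs'
    exact ⟨_, mul_ne_zero (inv_ne_zero ha) hb, hs'⟩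

theorem exists_adaptedBasis (h2 : TwoValued F) (hF : ∀ c : ℚ, c ≠ 0 → ∀ v, F (c • v) = F v)
    (hV : Module.finrank ℚ V = 3)
    (hpair : ∀ u v : V, u ≠ 0 → v ≠ 0 → F u ≠ F v → ∃ c : ℚ, c ≠ 0 ∧ PairSplit p F u (c • v))
    (h₁ : e₁ ≠ 0) (h₂ : e₂ ≠ 0) (h₃ : e₃ ≠ 0) (h₁₂ : F e₁ ≠ F e₂) (h₁₃ : F e₁ ≠ F e₃)
    (h₂₃ : F e₂ ≠ F e₃) : ∃ g₁ g₂ g₃ : V, AdaptedBasis p F g₁ g₂ g₃ := by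
  have hp0 : (p : ℚ) ≠ 0 := prime_cast_ne_zero
  obtain ⟨b, hb, k₁₂⟩ := hpair e₁ e₂ h₁ h₂ h₁₂
  replace h₂ := smul_ne_zero hb h₂
  rw [← hF b hb e₂] at h₁₂ h₂₃
  generalize b • e₂ = g₂ at *
  obtain ⟨d, hd, k₂₃⟩ := hpair g₂ e₃ h₂ h₃ h₂₃
  replace h₃ := smul_ne_zero hd h₃
  rw [← hF d hd e₃] at h₁₃ h₂₃
  generalize d • e₃ = g₃ at *
  obtain ⟨c, hc, k₃₁⟩ := hpair g₃ e₁ h₃ h₁ h₁₃.symm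
  have hi := indep_of_twoValued h2 hF h₁ h₂ h₃ h₁₂ h₁₃ h₂₃
  have hspan := spansThree_of_indep hV hi
  have hc1 : padicNorm p c < 1 := by
    by_contra hc1
    refine h2.not_cyclic hi h₁₂ h₁₃ h₂₃ k₁₂.apply_add k₂₃.apply_add ?_
    have := k₃₁.1 1 c⁻¹ one_ne_zero (by
      rw [padicNorm_inv, padicNorm.one]
      exact inv_le_one_of_one_le₀ (not_lt.mp hc1))
    rwa [one_smul, inv_smul_smul₀ hc] at this
  have k₃₂ := k₂₃.swap hF
  have k₂₁ := (k₁₂.swap hF).smul hF hp0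
  rw [smul_smul] at k₂₁
  have hp2 : (p : ℚ) * p ≠ 0 := mul_ne_zero hp0 hp0
  have hi' : ∀ x y z : ℚ, x • g₃ + y • (p : ℚ) • g₂ + z • ((p : ℚ) * p) • e₁ = 0 →
      x = 0 ∧ y = 0 ∧ z = 0 := by
    intro x y z h
    obtain ⟨t₁, t₂, t₃⟩ := hi (z * (p * p)) (y * p) x (by rw [← h]; module)
    exact ⟨t₃, (mul_eq_zero.mp t₂).resolve_right hp0, (mul_eq_zero.mp t₁).resolve_right hp2⟩
  have n₃₂ : F g₃ ≠ F ((p : ℚ) • g₂) := by rw [hF p hp0]; exact h₂₃.symm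
  have n₃₁ : F g₃ ≠ F (((p : ℚ) * p) • e₁) := by rw [hF _ hp2]; exact h₁₃.symm
  have n₂₁ : F ((p : ℚ) • g₂) ≠ F (((p : ℚ) * p) • e₁) := by
    rw [hF p hp0, hF _ hp2]
    exact h₁₂.symm
  have hc2 : padicNorm p ((p : ℚ) * p) ≤ padicNorm p c := by
    by_contra hc2
    refine h2.not_cyclic hi' n₃₂ n₃₁ n₂₁ k₃₂.apply_add k₂₁.apply_add ?_
    have := k₃₁.2 1 (((p : ℚ) * p) / c) (by
      rw [padicNorm.one, padicNorm.div, one_lt_div (padicNorm_pos hc)]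
      exact not_le.mp hc2)
    rwa [one_smul, smul_smul, div_mul_cancel₀ _ hc, hF c hc, ← hF _ hp2 e₁, add_comm] at this
  have hcp : padicNorm p c ≤ padicNorm p p := by
    have := padicNorm_le_prime_mul_of_lt (p := p) (a := c) (b := 1) (by simpa using hc1)
    rwa [mul_one] at this
  rcases hcp.lt_or_eq with hlt | heq
  · have hce := le_antisymm (padicNorm_le_prime_mul_of_lt hlt) hc2
    exact ⟨_, _, _, hi', spansThree_of_indep hV hi', n₃₂, n₃₁, n₂₁, k₃₂,
      k₃₁.congr_right hF hc hp2 hce, k₂₁⟩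
  · have k₁₃ := ((k₃₁.congr_right hF hc hp0 heq).swap hF).smul hF (inv_ne_zero hp0)
    rw [inv_smul_smul₀ hp0, inv_smul_smul₀ hp0] at k₁₃
    exact ⟨_, _, _, hi, hspan, h₁₂, h₁₃, h₂₃, k₁₂, k₁₃, k₂₃⟩

end Existence

section Projective

variable {V : Type v} [AddCommGroup V] [Module ℚ V] {A : Type w}

open Classical in
/-- The function on vectors attached to a map on the projective space, with value `a` at `0`. -/
noncomputable def liftVec (f : Projectivization ℚ V → A) (a : A) (v : V) : A :=
  if h : v = 0 then a else f (Projectivization.mk ℚ v h)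

variable {f : Projectivization ℚ V → A} {a : A}

theorem apply_mk_eq_liftVec (v : V) (hv : v ≠ 0) :
    f (Projectivization.mk ℚ v hv) = liftVec f a v := by
  rw [liftVec, dif_neg hv]

theorem liftVec_smul (c : ℚ) (hc : c ≠ 0) (v : V) : liftVec f a (c • v) = liftVec f a v := by
  by_cases hv : v = 0
  · rw [hv, smul_zero]
  · rw [← apply_mk_eq_liftVec _ hv, ← apply_mk_eq_liftVec _ (smul_ne_zero hc hv)]
    congr 1
    exact (Projectivization.mk_eq_mk_iff' ℚ _ _ _ _).mpr ⟨c, rfl⟩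

theorem finrank_span_pair_of_apply_ne {F : V → A} (hF : ∀ c : ℚ, c ≠ 0 → ∀ v, F (c • v) = F v)
    {u v : V} (hu : u ≠ 0) (hv : v ≠ 0) (huv : F u ≠ F v) :
    Module.finrank ℚ (Submodule.span ℚ {u, v}) = 2 := by
  have hli : LinearIndependent ℚ ![u, v] := by
    refine (LinearIndependent.pair_iff' hu).mpr fun c hc => huv ?_
    rw [← hc, hF c fun h0 => hv (by rw [← hc, h0, zero_smul])]
  have h := finrank_span_eq_card hli
  rwa [Matrix.range_cons_cons_empty, Fintype.card_fin] at h

theorem twoValued_liftVec (h2 : ∀ W : Submodule ℚ V, Module.finrank ℚ W = 2 →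
    ∀ x ∈ psub W, ∀ y ∈ psub W, ∀ z ∈ psub W, f x = f y ∨ f x = f z ∨ f y = f z) :
    TwoValued (liftVec f a) := by
  intro u v b c hu hv hne huv
  have hu' : u ∈ Submodule.span ℚ {u, v} := Submodule.subset_span (by simp)
  have hv' : v ∈ Submodule.span ℚ {u, v} := Submodule.subset_span (by simp)
  have h := h2 _ (finrank_span_pair_of_apply_ne liftVec_smul hu hv huv)
    (Projectivization.mk ℚ _ hne)
    ⟨_, hne, rfl, add_mem (Submodule.smul_mem _ _ hu') (Submodule.smul_mem _ _ hv')⟩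
    (Projectivization.mk ℚ u hu) ⟨_, hu, rfl, hu'⟩ (Projectivization.mk ℚ v hv) ⟨_, hv, rfl, hv'⟩
  simp only [apply_mk_eq_liftVec (f := f) (a := a)] at h
  tauto

variable {p : ℕ} [Fact p.Prime] {B : Set V}

theorem exists_residueFlag (hB : IsZpLatIn p ⊤ B) (hind : InducedOn f ⊤ p B)
    (hflag : ResFlagPlane f p B) : ∃ q w, ResidueFlag p (liftVec f a) B q w := by
  obtain ⟨q, w, hq, hw, -, hoff, hon⟩ := hflag
  have hS := hB.zpStable
  have h0 : ∀ x : V, x ∉ pSMul p B → x ≠ 0 := fun x hx h => hx (h ▸ hS.pSMul.1)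
  have hsub : pSMul p B ⊆ resLineV p B q w := pSMul_subset_resLineV
  have hrel : ∀ x y, x ∉ pSMul p B → y ∉ pSMul p B → ZpRelV p B x y →
      liftVec f a x = liftVec f a y := fun x y hx hy hxy => by
    have := hind x y (h0 x hx) (h0 y hy) trivial trivial hxy
    rwa [apply_mk_eq_liftVec (f := f) (a := a), apply_mk_eq_liftVec (f := f) (a := a)] at this
  refine ⟨q, w, hS, liftVec_smul, ?_, hq.1, hq.2, hw.1, fun x _ hx' => hrel x q hx' hq.2, ?_, ?_⟩
  · intro x y hx hx' hy
    have h1 : x + y ∈ B := hS.2.1 _ hx _ (hS.pSMul_subset hy)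
    have h2 : x + y ∉ pSMul p B := fun h => hx' (by simpa using hS.pSMul.sub_mem h hy)
    exact hrel _ _ h2 hx' ⟨x + y, x, ⟨1, one_ne_zero, by simp⟩, ⟨1, one_ne_zero, by simp⟩, h1, h2,
      hx, hx', by simpa using hy⟩
  · intro x y hx hx' hy hy'
    have hxp : x ∉ pSMul p B := fun h => hx' (hsub h)
    have hyp : y ∉ pSMul p B := fun h => hy' (hsub h)
    have := hoff x y (h0 x hxp) (h0 y hyp) ⟨1, one_ne_zero, by simp [hx, hxp], by simpa using hx'⟩
      ⟨1, one_ne_zero, by simp [hy, hyp], by simpa using hy'⟩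
    rwa [apply_mk_eq_liftVec (f := f) (a := a), apply_mk_eq_liftVec (f := f) (a := a)] at this
  · intro x y hx hx' hxr hy hy' hyr
    have := hon x y (h0 x hx') (h0 y hy') ⟨1, one_ne_zero, by simp [hx, hx']⟩ hxr
      ⟨1, one_ne_zero, by simp [hy, hy']⟩ hyr
    rwa [apply_mk_eq_liftVec (f := f) (a := a), apply_mk_eq_liftVec (f := f) (a := a)] at this

end Projective

/-- Lemma 3.5: let `f : ℙ(ℚ³) → A` take exactly three
values, at most two on every line, with the restriction to every line induced
via a `ℤ_(p)`-lattice from a flag map on the residue line.  Then there are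
exactly three equivalence classes of `ℤ_(p)`-lattices `B ⊆ ℚ³` such that `f`
is induced via `B` from a flag map on `ℙ(B/pB)`. -/
theorem stmt10 (p : ℕ) (hp : p.Prime) (A : Type w)
    (f : Projectivization ℚ (Fin 3 → ℚ) → A)
    (h3 : ∃ a₁ a₂ a₃ : A, a₁ ≠ a₂ ∧ a₁ ≠ a₃ ∧ a₂ ≠ a₃ ∧
      Set.range f = {a₁, a₂, a₃})
    (h2 : ∀ W : Submodule ℚ (Fin 3 → ℚ), Module.finrank ℚ W = 2 →
      ∀ x ∈ psub W, ∀ y ∈ psub W, ∀ z ∈ psub W, f x = f y ∨ f x = f z ∨ f y = f z)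
    (hlines : ∀ W : Submodule ℚ (Fin 3 → ℚ), Module.finrank ℚ W = 2 →
      ∃ B : Set (Fin 3 → ℚ), IsZpLatIn p W B ∧ InducedOn f W p B ∧
        ∃ q : Fin 3 → ℚ, q ∈ B \ pSMul p B ∧
          ∀ x y : Fin 3 → ℚ, ∀ (hx : x ≠ 0) (hy : y ≠ 0), x ∈ W → y ∈ W →
            ¬ ZpRelV p B x q → ¬ ZpRelV p B y q →
            f (Projectivization.mk ℚ x hx) = f (Projectivization.mk ℚ y hy)) :
    ∃ B₁ B₂ B₃ : Set (Fin 3 → ℚ),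
      (IsZpLatIn p ⊤ B₁ ∧ InducedOn f ⊤ p B₁ ∧ ResFlagPlane f p B₁) ∧
      (IsZpLatIn p ⊤ B₂ ∧ InducedOn f ⊤ p B₂ ∧ ResFlagPlane f p B₂) ∧
      (IsZpLatIn p ⊤ B₃ ∧ InducedOn f ⊤ p B₃ ∧ ResFlagPlane f p B₃) ∧
      ¬ LatEq B₁ B₂ ∧ ¬ LatEq B₁ B₃ ∧ ¬ LatEq B₂ B₃ ∧
      ∀ B' : Set (Fin 3 → ℚ),
        IsZpLatIn p ⊤ B' → InducedOn f ⊤ p B' → ResFlagPlane f p B' →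
        (LatEq B' B₁ ∨ LatEq B' B₂ ∨ LatEq B' B₃) := by
  have : Fact p.Prime := ⟨hp⟩
  obtain ⟨a₁, a₂, a₃, h₁₂, h₁₃, h₂₃, hrange⟩ := h3
  have hF := liftVec_smul (f := f) (a := a₁)
  have hf := apply_mk_eq_liftVec (f := f) (a := a₁)
  have htwo := twoValued_liftVec (a := a₁) h2
  have hsurj : ∀ a ∈ ({a₁, a₂, a₃} : Set A), ∃ e : Fin 3 → ℚ, e ≠ 0 ∧ liftVec f a₁ e = a := by
    intro a ha
    rw [← hrange] at ha
    obtain ⟨x, rfl⟩ := ha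
    exact ⟨x.rep, x.rep_nonzero, by rw [← hf _ x.rep_nonzero, x.mk_rep]⟩
  obtain ⟨e₁, he₁, k₁⟩ := hsurj a₁ (by simp)
  obtain ⟨e₂, he₂, k₂⟩ := hsurj a₂ (by simp)
  obtain ⟨e₃, he₃, k₃⟩ := hsurj a₃ (by simp)
  have hpair : ∀ u v : Fin 3 → ℚ, u ≠ 0 → v ≠ 0 → liftVec f a₁ u ≠ liftVec f a₁ v →
      ∃ c : ℚ, c ≠ 0 ∧ PairSplit p (liftVec f a₁) u (c • v) := by
    intro u v hu hv huv
    obtain ⟨B, hB, hind, q, hq, hoff⟩ :=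
      hlines _ (finrank_span_pair_of_apply_ne hF hu hv huv)
    refine exists_pairSplit hF hB (fun x hx y hy hx0 hy0 hxy => ?_) hq.1 hq.2
      (fun x hx y hy hx0 hy0 hxq hyq => ?_) (Submodule.subset_span (by simp))
      (Submodule.subset_span (by simp)) hu hv huv
    · rw [← hf x hx0, ← hf y hy0]
      exact hind x y hx0 hy0 hx hy hxy
    · rw [← hf x hx0, ← hf y hy0]
      exact hoff x y hx0 hy0 hx hy hxq hyq
  obtain ⟨g₁, g₂, g₃, h⟩ := exists_adaptedBasis htwo hF (by simp) hpair he₁ he₂ he₃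
    (by rwa [k₁, k₂]) (by rwa [k₁, k₃]) (by rwa [k₂, k₃])
  have h' := h.rotate hF
  have h'' := h'.rotate hF
  refine ⟨_, _, _, ⟨h.isZpLatIn, h.inducedOn htwo hF hf, h.resFlagPlane htwo hF hf⟩,
    ⟨h'.isZpLatIn, h'.inducedOn htwo hF hf, h'.resFlagPlane htwo hF hf⟩,
    ⟨h''.isZpLatIn, h''.inducedOn htwo hF hf, h''.resFlagPlane htwo hF hf⟩,
    h.not_latEq_rotate, h.not_latEq_rotate_rotate, h'.not_latEq_rotate, fun B hB hind hflag => ?_⟩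
  obtain ⟨q, w, hres⟩ := exists_residueFlag (a := a₁) hB hind hflag
  exact h.latEq_of_residueFlag hres fun v hv => hB.exists_smul_mem trivial hv
end
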